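/- For any discrete memoryless channel W: X → Y on finite alphabets and any r ≥ 0, the strong converse exponent satisfies E_sc^{(α)}(W,r) = max_{α≤β≤1} [α(1−β)/(β(1−α))] (I_β(W) − r) for α ∈ (0,1), and E_sc^{(α)}(W,r) = max{I_α(W) − r, 0} for α ∈ {0} ∪ [1,∞]. -/

import Mathlib

open scoped ENNReal NNReal BigOperators Classical
open Filter

noncomputable section

namespace RST

/-- Base-2 logarithm `ℝ≥0∞ → EReal`, with `log 0 = ⊥` and `log ⊤ = ⊤`. -/
def elog2 (s : ℝ≥0∞) : EReal :=
  if s = 0 then ⊥ else if s = ⊤ then ⊤ else ((Real.logb 2 s.toReal : ℝ) : EReal)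

/-- Base-2 logarithm `EReal → EReal` (for nonnegative arguments). -/
def eLog2 (x : EReal) : EReal :=
  if x = ⊤ then ⊤ else if x ≤ 0 then ⊥ else ((Real.logb 2 x.toReal : ℝ) : EReal)

/-- Base-2 exponential `EReal → ℝ≥0∞`. -/
def epow2 (x : EReal) : ℝ≥0∞ :=
  if x = ⊤ then ⊤ else if x = ⊥ then 0 else ENNReal.ofReal ((2 : ℝ) ^ x.toReal)

variable {X Y : Type*}

/-- A probability distribution on a finite alphabet, as an `ℝ≥0∞`-valued function. -/
def IsDist [Fintype X] (P : X → ℝ≥0∞) : Prop := ∑ x, P x = 1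

/-- A discrete memoryless channel: every row is a probability distribution. -/
def IsChannel [Fintype X] [Fintype Y] (W : X → Y → ℝ≥0∞) : Prop := ∀ x, ∑ y, W x y = 1

/-- Order-`α` Rényi divergence (base 2), with the order `α ∈ [0,∞]` encoded as `ℝ≥0∞`.
The conventions `0/0 = 0` and `a/0 = ∞` (for `a > 0`, `α > 1`) are built into `ℝ≥0∞`
arithmetic.  The second argument is allowed to be an arbitrary nonnegative vector. -/
def renyiD [Fintype X] (α : ℝ≥0∞) (P Q : X → ℝ≥0∞) : EReal :=
  if α = 0 then - elog2 (∑ x ∈ Finset.univ.filter fun x => P x ≠ 0, Q x)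
  else if α = 1 then ∑ x, ((P x).toReal : EReal) * elog2 (P x / Q x)
  else if α = ⊤ then elog2 (⨆ x, P x / Q x)
  else (((α.toReal - 1)⁻¹ : ℝ) : EReal) *
    elog2 (∑ x, P x ^ α.toReal * Q x ^ (1 - α.toReal))

/-- The `X`-marginal of a joint distribution on `X × Y`. -/
def margX [Fintype X] [Fintype Y] (P : X × Y → ℝ≥0∞) : X → ℝ≥0∞ := fun x => ∑ y, P (x, y)

/-- Order-`α` Rényi mutual information `I_α(X:Y)_P = min_{Q_Y} D_α(P‖P_X × Q_Y)`. -/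
def renyiMI [Fintype X] [Fintype Y] (α : ℝ≥0∞) (P : X × Y → ℝ≥0∞) : EReal :=
  ⨅ Q : {Q : Y → ℝ≥0∞ // IsDist Q}, renyiD α P fun p => margX P p.1 * Q.1 p.2

/-- The joint input-output distribution `P_X · W`. -/
def joint [Fintype X] [Fintype Y] (PX : X → ℝ≥0∞) (W : X → Y → ℝ≥0∞) : X × Y → ℝ≥0∞ :=
  fun p => PX p.1 * W p.1 p.2

/-- Order-`α` Rényi capacity `I_α(W) = max_{P_X} I_α(X:Y)_{P_X · W}`. -/
def renyiCap [Fintype X] [Fintype Y] (α : ℝ≥0∞) (W : X → Y → ℝ≥0∞) : EReal :=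
  ⨆ P : {P : X → ℝ≥0∞ // IsDist P}, renyiMI α (joint P.1 W)

/-- `N` is a simulation of a channel `X → Y` with communication cost at most `c` bits:
shared randomness `K = Fin m` with distribution `PK`, a message set `{1,…,M}` with
`log₂ M ≤ c`, an encoder `E` and a decoder `D`. -/
def IsSimulation [Fintype X] [Fintype Y] (c : ℝ) (N : X → Y → ℝ≥0∞) : Prop :=
  ∃ (m M : ℕ) (PK : Fin m → ℝ≥0∞) (E : X → Fin m → Fin M → ℝ≥0∞)
    (D : Fin M → Fin m → Y → ℝ≥0∞),
    0 < M ∧ Real.logb 2 M ≤ c ∧ (∑ k, PK k = 1) ∧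
    (∀ x k, ∑ j, E x k j = 1) ∧ (∀ j k, ∑ y, D j k y = 1) ∧
    ∀ x y, N x y = ∑ k, ∑ j, PK k * E x k j * D j k y

/-- `D_α(W, N) := max_x D_α(W(·|x) ‖ N(·|x))`. -/
def chD [Fintype X] [Fintype Y] (α : ℝ≥0∞) (W N : X → Y → ℝ≥0∞) : EReal :=
  ⨆ x, renyiD α (W x) (N x)

/-- `𝖣_α(W, c) := min_{N ∈ A(W,c)} D_α(W, N)`. -/
def simD [Fintype X] [Fintype Y] (α : ℝ≥0∞) (W : X → Y → ℝ≥0∞) (c : ℝ) : EReal :=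
  ⨅ N : {N : X → Y → ℝ≥0∞ // IsSimulation c N}, chD α W N.1

/-- The `n`-fold memoryless extension `W^{×n}` of a channel `W`. -/
def prodCh [Fintype X] [Fintype Y] (n : ℕ) (W : X → Y → ℝ≥0∞) :
    (Fin n → X) → (Fin n → Y) → ℝ≥0∞ :=
  fun xs ys => ∏ i, W (xs i) (ys i)

/-- A sequence of communication costs with rate at most `r`. -/
def RateOK (r : ℝ) (c : ℕ → ℝ) : Prop :=
  (∀ n, 0 ≤ c n) ∧ Filter.limsup (fun n : ℕ => ((c n / n : ℝ) : EReal)) Filter.atTop ≤ (r : EReal)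

/-- Reliability function `E_rf^{(α)}(W, r)`. -/
def Erf [Fintype X] [Fintype Y] (α : ℝ≥0∞) (W : X → Y → ℝ≥0∞) (r : ℝ) : EReal :=
  ⨆ c : {c : ℕ → ℝ // RateOK r c},
    Filter.liminf
      (fun n : ℕ => (((-1 : ℝ) / n : ℝ) : EReal) * eLog2 (simD α (prodCh n W) (c.1 n)))
      Filter.atTop

/-- Strong converse exponent `E_sc^{(α)}(W, r)`. -/
def Esc [Fintype X] [Fintype Y] (α : ℝ≥0∞) (W : X → Y → ℝ≥0∞) (r : ℝ) : EReal :=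
  ⨅ c : {c : ℕ → ℝ // RateOK r c},
    Filter.limsup
      (fun n : ℕ => (((1 : ℝ) / n : ℝ) : EReal) * simD α (prodCh n W) (c.1 n))
      Filter.atTop

/-- The `α`-Rényi simulation rate `R_RST^{(α)}(W)`. -/
def Rrst [Fintype X] [Fintype Y] (α : ℝ≥0∞) (W : X → Y → ℝ≥0∞) : EReal :=
  ⨅ c : {c : ℕ → ℝ // (∀ n, 0 ≤ c n) ∧
      Filter.limsup (fun n : ℕ => simD α (prodCh n W) (c n)) Filter.atTop = 0},
    Filter.limsup (fun n : ℕ => ((c.1 n / n : ℝ) : EReal)) Filter.atTop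

/-- n-fold product of a joint distribution on `X × Y`, as a distribution on pairs of
sequences. -/
def prodJoint [Fintype X] [Fintype Y] (n : ℕ) (P : X × Y → ℝ≥0∞) :
    (Fin n → X) × (Fin n → Y) → ℝ≥0∞ :=
  fun p => ∏ i, P (p.1 i, p.2 i)

/-- n-fold product distribution. -/
def prodDist [Fintype X] (n : ℕ) (P : X → ℝ≥0∞) : (Fin n → X) → ℝ≥0∞ :=
  fun xs => ∏ i, P (xs i)

/-- The type (empirical count vector) of a sequence. -/
def seqType [Fintype Y] [DecidableEq Y] {n : ℕ} (ys : Fin n → Y) : Y → ℕ :=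
  fun y => (Finset.univ.filter fun i => ys i = y).card

/-- The cardinality of the type class of a sequence. -/
def typeClassCard [Fintype Y] [DecidableEq Y] {n : ℕ} (ys : Fin n → Y) : ℕ :=
  (Finset.univ.filter fun zs : Fin n → Y => seqType zs = seqType ys).card

/-- The number of types of sequences in `Y^n`. -/
def numTypes (Y : Type*) [Fintype Y] [DecidableEq Y] (n : ℕ) : ℕ :=
  (Finset.univ.image fun ys : Fin n → Y => seqType ys).card

/-- `Φ_{Y^n}`: the uniform mixture over type classes of `Y^n`. -/
def PhiY (Y : Type*) [Fintype Y] [DecidableEq Y] (n : ℕ) : (Fin n → Y) → ℝ≥0∞ :=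
  fun ys => ((numTypes Y n : ℝ≥0∞) * (typeClassCard ys : ℝ≥0∞))⁻¹

end RST

/-!
A simulation `N` with `c` bits satisfies `N(y|x) ≤ 2 ^ c * Q(y)` for some distribution `Q`, and
conversely rejection sampling from `2 ^ c` shared samples of `Q` simulates every subchannel obeying
this bound, up to a constant factor. The exponent is therefore that of approximating `W^{×n}` by
channels dominated by `2 ^ (n r)` times a fixed output distribution.

For the converse, the domination gives `I_α(W^{×n}) ≤ D_α(W^{×n}, N) + c`, and `I_α` is additive.
For `α ≤ β < 1`, Hölder's inequality gives `(α(1-β))/(β(1-α)) D_β ≤ D_α`, which produces the other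
terms of the maximum.

For achievability at `α > 1`, take the capacity-achieving output distribution `q` and cap `W^{×n}`
at `2 ^ (n r) q^{×n}`; for `α = ∞`, rescale it. For `α < 1`, put `s = α/(1-α)` and use
`D_α(P‖N) ≤ s D(V‖P) + D(V‖N)`: on inputs of type `τ`, simulate another channel `V_τ`, capped at
`2 ^ (n r)` times a universal mixture of product distributions `q_τ^{×n}`. This costs
`s D(V_τ‖W|τ) + max (D(V_τ‖q_τ|τ) - r) 0` per letter, up to a fluctuation of order `1/√n`. Writing
the positive part as a maximum over `t ∈ [0, 1]` of `t (D(V_τ‖q_τ|τ) - r)`, the minimax theorem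
reduces the choice of `(V_τ, q_τ)` to a fixed `t`, where tilting `W` towards `q` gives
`t (I_β(W) - r)` with `β = s/(s+t)`. The order `α = 1` is the case `s = 0`, `V = W`.
-/

namespace RST

lemma two_rpow_ne_zero (d : ℝ) : (2 : ℝ≥0∞) ^ d ≠ 0 := by simp

lemma two_rpow_ne_top (d : ℝ) : (2 : ℝ≥0∞) ^ d ≠ ⊤ := by simp [ENNReal.rpow_eq_top_iff]

lemma two_rpow_add (c d : ℝ) : (2 : ℝ≥0∞) ^ (c + d) = 2 ^ c * 2 ^ d :=
  ENNReal.rpow_add c d two_ne_zero ENNReal.ofNat_ne_top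

lemma two_rpow_eq_ofReal (d : ℝ) : (2 : ℝ≥0∞) ^ d = ENNReal.ofReal ((2 : ℝ) ^ d) := by
  rw [← ENNReal.ofReal_rpow_of_pos two_pos, ENNReal.ofReal_ofNat]

lemma two_rpow_le_two_rpow_iff {c d : ℝ} : (2 : ℝ≥0∞) ^ c ≤ 2 ^ d ↔ c ≤ d := by
  rw [two_rpow_eq_ofReal, two_rpow_eq_ofReal, ENNReal.ofReal_le_ofReal_iff (by positivity),
    Real.rpow_le_rpow_left_iff one_lt_two]

lemma elog2_le_coe_iff {s : ℝ≥0∞} {d : ℝ} : elog2 s ≤ d ↔ s ≤ 2 ^ d := by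
  unfold elog2
  split_ifs with h0 ht
  · simp [h0]
  · simp [ht]
  · rw [EReal.coe_le_coe_iff, Real.logb_le_iff_le_rpow one_lt_two (ENNReal.toReal_pos h0 ht),
      two_rpow_eq_ofReal, ENNReal.le_ofReal_iff_toReal_le ht (by positivity)]

lemma coe_le_elog2_iff {s : ℝ≥0∞} {d : ℝ} : (d : EReal) ≤ elog2 s ↔ 2 ^ d ≤ s := by
  unfold elog2
  split_ifs with h0 ht
  · simp [h0]
  · simp [ht]
  · rw [EReal.coe_le_coe_iff, Real.le_logb_iff_rpow_le one_lt_two (ENNReal.toReal_pos h0 ht),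
      two_rpow_eq_ofReal, ENNReal.ofReal_le_iff_le_toReal ht]

lemma elog2_mono : Monotone elog2 := fun _ _ h =>
  EReal.le_of_forall_lt_iff_le.1 fun _ hd => elog2_le_coe_iff.2 (h.trans (elog2_le_coe_iff.1 hd.le))

lemma inv_mul_le_coe_iff_of_pos {c : ℝ} (hc : 0 < c) {e : EReal} {d : ℝ} :
    ((c⁻¹ : ℝ) : EReal) * e ≤ d ↔ e ≤ ((c * d : ℝ) : EReal) := by
  have hi : 0 < c⁻¹ := inv_pos.2 hc
  induction e with
  | bot => simp [EReal.coe_mul_bot_of_pos hi]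
  | top => rw [EReal.coe_mul_top_of_pos hi]; simp only [top_le_iff, EReal.coe_ne_top]
  | coe e => norm_cast; exact inv_mul_le_iff₀ hc

lemma inv_mul_le_coe_iff_of_neg {c : ℝ} (hc : c < 0) {e : EReal} {d : ℝ} :
    ((c⁻¹ : ℝ) : EReal) * e ≤ d ↔ ((c * d : ℝ) : EReal) ≤ e := by
  have hi : c⁻¹ < 0 := inv_lt_zero.2 hc
  induction e with
  | bot =>
    rw [EReal.coe_mul_bot_of_neg hi]
    simp only [top_le_iff, EReal.coe_ne_top, le_bot_iff, EReal.coe_ne_bot]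
  | top => simp [EReal.coe_mul_top_of_neg hi]
  | coe e => norm_cast; rw [inv_mul_eq_div, div_le_iff_of_neg hc, mul_comm]

lemma coe_le_inv_mul_iff_of_pos {c : ℝ} (hc : 0 < c) {e : EReal} {d : ℝ} :
    d ≤ ((c⁻¹ : ℝ) : EReal) * e ↔ ((c * d : ℝ) : EReal) ≤ e := by
  rw [← EReal.neg_le_neg_iff, ← EReal.neg_mul, ← EReal.coe_neg, ← EReal.coe_neg, ← inv_neg,
    inv_mul_le_coe_iff_of_neg (neg_neg_of_pos hc), neg_mul_neg]

lemma inv_mul_lt_coe_iff_of_pos {c : ℝ} (hc : 0 < c) {e : EReal} {d : ℝ} :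
    ((c⁻¹ : ℝ) : EReal) * e < d ↔ e < ((c * d : ℝ) : EReal) := by
  rw [← not_le, coe_le_inv_mul_iff_of_pos hc, not_le]

lemma coe_le_inv_mul_iff_of_neg {c : ℝ} (hc : c < 0) {e : EReal} {d : ℝ} :
    d ≤ ((c⁻¹ : ℝ) : EReal) * e ↔ e ≤ ((c * d : ℝ) : EReal) := by
  rw [← EReal.neg_le_neg_iff, ← EReal.neg_mul, ← EReal.coe_neg, ← EReal.coe_neg, ← inv_neg,
    inv_mul_le_coe_iff_of_pos (neg_pos.2 hc), neg_mul_neg]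

lemma order_cases (α : ℝ≥0∞) :
    α = 1 ∨ α = ⊤ ∨ ∃ a : ℝ, 0 ≤ a ∧ a ≠ 1 ∧ α = ENNReal.ofReal a := by
  by_cases h1 : α = 1
  · exact .inl h1
  by_cases ht : α = ⊤
  · exact .inr (.inl ht)
  · exact .inr (.inr ⟨α.toReal, ENNReal.toReal_nonneg,
      fun h => h1 ((ENNReal.toReal_eq_one_iff α).1 h), (ENNReal.ofReal_toReal ht).symm⟩)

section Divergence

variable {A : Type*} [Fintype A] {P Q Q' : A → ℝ≥0∞}

lemma IsDist.le_one (h : IsDist P) (x : A) : P x ≤ 1 :=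
  (Finset.single_le_sum (f := P) (fun _ _ => zero_le) (Finset.mem_univ x)).trans_eq h

lemma IsDist.ne_top (h : IsDist P) (x : A) : P x ≠ ⊤ :=
  ne_top_of_le_ne_top ENNReal.one_ne_top (h.le_one x)

lemma IsDist.sum_toReal (h : IsDist P) : ∑ x, (P x).toReal = 1 := by
  rw [← ENNReal.toReal_sum fun x _ => h.ne_top x, show ∑ x, P x = 1 from h, ENNReal.toReal_one]

lemma IsDist.exists_ne_zero (h : IsDist P) : ∃ x, P x ≠ 0 := by
  by_contra! h0
  simp [IsDist, h0] at h

/-- The power `p^a` with the convention `0^0 = 0`, under which `∑ P^a Q^(1-a)` also gives the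
Rényi divergence of order `0`. -/
def suppRpow (p : ℝ≥0∞) (a : ℝ) : ℝ≥0∞ := if p = 0 then 0 else p ^ a

@[simp]
lemma zero_suppRpow (a : ℝ) : suppRpow 0 a = 0 := if_pos rfl

lemma suppRpow_of_pos (p : ℝ≥0∞) {a : ℝ} (ha : 0 < a) : suppRpow p a = p ^ a := by
  by_cases hp : p = 0 <;> simp [suppRpow, hp, ha]

lemma suppRpow_eq_zero_iff {p : ℝ≥0∞} (hp : p ≠ ⊤) {a : ℝ} : suppRpow p a = 0 ↔ p = 0 := by
  by_cases h : p = 0 <;> simp [suppRpow, ENNReal.rpow_eq_zero_iff, h, hp]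

lemma suppRpow_prod {ι : Type*} [Fintype ι] {p : ι → ℝ≥0∞} (hp : ∀ i, p i ≠ ⊤) (a : ℝ) :
    suppRpow (∏ i, p i) a = ∏ i, suppRpow (p i) a := by
  by_cases h : ∃ i, p i = 0
  · obtain ⟨i, hi⟩ := h
    rw [Finset.prod_eq_zero (Finset.mem_univ i) hi, zero_suppRpow,
      Finset.prod_eq_zero (Finset.mem_univ i) (by rw [hi, zero_suppRpow])]
  · push Not at h
    rw [suppRpow, if_neg (Finset.prod_ne_zero_iff.2 fun i _ => h i),
      ← ENNReal.prod_rpow_of_ne_top fun i _ => hp i]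
    exact Finset.prod_congr rfl fun i _ => (if_neg (h i)).symm

/-- The sum `∑ P^a Q^(1-a)` inside the Rényi divergence of a finite order `a ≠ 1`. -/
def renyiSum (a : ℝ) (P Q : A → ℝ≥0∞) : ℝ≥0∞ := ∑ x, suppRpow (P x) a * Q x ^ (1 - a)

lemma renyiD_ofReal {a : ℝ} (h0 : 0 ≤ a) (h1 : a ≠ 1) (P Q : A → ℝ≥0∞) :
    renyiD (ENNReal.ofReal a) P Q = (((a - 1)⁻¹ : ℝ) : EReal) * elog2 (renyiSum a P Q) := by
  rcases h0.eq_or_lt with rfl | h0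
  · simp [renyiD, renyiSum, suppRpow, Finset.sum_filter]
  · have e0 : ENNReal.ofReal a ≠ 0 := by simpa using h0
    have e1 : ENNReal.ofReal a ≠ 1 := by simpa using h1
    simp only [renyiD, e0, e1, ENNReal.ofReal_ne_top, if_false, ENNReal.toReal_ofReal h0.le,
      renyiSum, suppRpow_of_pos _ h0]

lemma renyiD_le_iff_of_lt_one {a : ℝ} (h0 : 0 ≤ a) (h1 : a < 1) {d : ℝ} :
    renyiD (ENNReal.ofReal a) P Q ≤ d ↔ 2 ^ ((a - 1) * d) ≤ renyiSum a P Q := by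
  rw [renyiD_ofReal h0 h1.ne, inv_mul_le_coe_iff_of_neg (sub_neg.2 h1), coe_le_elog2_iff]

lemma renyiD_le_iff_of_one_lt {a : ℝ} (h1 : 1 < a) {d : ℝ} :
    renyiD (ENNReal.ofReal a) P Q ≤ d ↔ renyiSum a P Q ≤ 2 ^ ((a - 1) * d) := by
  rw [renyiD_ofReal (by linarith) h1.ne', inv_mul_le_coe_iff_of_pos (sub_pos.2 h1),
    elog2_le_coe_iff]

lemma coe_le_renyiD_iff_of_lt_one {a : ℝ} (h0 : 0 ≤ a) (h1 : a < 1) {d : ℝ} :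
    d ≤ renyiD (ENNReal.ofReal a) P Q ↔ renyiSum a P Q ≤ 2 ^ ((a - 1) * d) := by
  rw [renyiD_ofReal h0 h1.ne, coe_le_inv_mul_iff_of_neg (sub_neg.2 h1), elog2_le_coe_iff]

lemma coe_le_renyiD_iff_of_one_lt {a : ℝ} (h1 : 1 < a) {d : ℝ} :
    d ≤ renyiD (ENNReal.ofReal a) P Q ↔ 2 ^ ((a - 1) * d) ≤ renyiSum a P Q := by
  rw [renyiD_ofReal (by linarith) h1.ne', coe_le_inv_mul_iff_of_pos (sub_pos.2 h1),
    coe_le_elog2_iff]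

lemma renyiD_top_le_iff {d : ℝ} :
    renyiD ⊤ P Q ≤ d ↔ ∀ x, P x ≤ 2 ^ d * Q x := by
  rw [renyiD, if_neg (by simp), if_neg (by simp), if_pos rfl, elog2_le_coe_iff, iSup_le_iff]
  refine forall_congr' fun x => ?_
  by_cases hx : P x = 0
  · simp [hx]
  · exact ENNReal.div_le_iff_le_mul (.inr (two_rpow_ne_top d)) (.inr (two_rpow_ne_zero d))

/-- The relative entropy `∑ v log₂ (v / q)` of real vectors. It is only meaningful when `v`
vanishes wherever `q` does, since `v / 0 = 0` would otherwise hide an infinite term. -/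
def kl (v q : A → ℝ) : ℝ := ∑ x, v x * Real.logb 2 (v x / q x)

lemma coe_sum_ereal (f : A → ℝ) : ((∑ x, f x : ℝ) : EReal) = ∑ x, (f x : EReal) :=
  map_sum (⟨⟨Real.toEReal, EReal.coe_zero⟩, EReal.coe_add⟩ : ℝ →+ EReal) f Finset.univ

lemma renyiD_one_eq_coe_kl (hP : ∀ x, P x ≠ ⊤) (hQ : ∀ x, Q x ≠ ⊤)
    (h : ∀ x, P x ≠ 0 → Q x ≠ 0) :
    renyiD 1 P Q = (kl (fun x => (P x).toReal) fun x => (Q x).toReal : ℝ) := by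
  rw [renyiD, if_neg one_ne_zero, if_pos rfl, kl, coe_sum_ereal]
  refine Finset.sum_congr rfl fun x _ => ?_
  by_cases hx : P x = 0
  · simp [hx]
  · have h0 : P x / Q x ≠ 0 := by simp [ENNReal.div_eq_zero_iff, hx, hQ x]
    have ht : P x / Q x ≠ ⊤ := by simp [ENNReal.div_eq_top, hx, hP x, h x hx]
    rw [elog2, if_neg h0, if_neg ht, ENNReal.toReal_div, EReal.coe_mul]

lemma renyiD_one_eq_top (hP : ∀ x, P x ≠ ⊤) (hQ : ∀ x, Q x ≠ ⊤) {x : A} (hx : P x ≠ 0)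
    (hq : Q x = 0) : renyiD 1 P Q = ⊤ := by
  have term_ne_bot : ∀ y, ((P y).toReal : EReal) * elog2 (P y / Q y) ≠ ⊥ := by
    intro y
    by_cases hy : P y = 0
    · simp [hy]
    have hpos : 0 < (P y).toReal := ENNReal.toReal_pos hy (hP y)
    have h0 : P y / Q y ≠ 0 := by simp [ENNReal.div_eq_zero_iff, hy, hQ y]
    rw [elog2, if_neg h0]
    split_ifs
    · simp [EReal.coe_mul_top_of_pos hpos]
    · exact EReal.coe_ne_bot _
  have term_top : ((P x).toReal : EReal) * elog2 (P x / Q x) = ⊤ := by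
    rw [hq, ENNReal.div_zero hx, elog2, if_neg ENNReal.top_ne_zero, if_pos rfl]
    exact EReal.coe_mul_top_of_pos (ENNReal.toReal_pos hx (hP x))
  rw [renyiD, if_neg one_ne_zero, if_pos rfl, ← Finset.add_sum_erase _ _ (Finset.mem_univ x),
    term_top]
  refine EReal.top_add_of_ne_bot (Finset.sum_induction _ (· ≠ ⊥) (fun a b ha hb => ?_) (by simp)
    fun y _ => term_ne_bot y)
  exact EReal.add_ne_bot_iff.2 ⟨ha, hb⟩

lemma renyiD_one_le_iff (hP : ∀ x, P x ≠ ⊤) (hQ : ∀ x, Q x ≠ ⊤) {d : ℝ} :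
    renyiD 1 P Q ≤ d ↔ (∀ x, P x ≠ 0 → Q x ≠ 0) ∧
      kl (fun x => (P x).toReal) (fun x => (Q x).toReal) ≤ d := by
  by_cases h : ∀ x, P x ≠ 0 → Q x ≠ 0
  · rw [renyiD_one_eq_coe_kl hP hQ h, EReal.coe_le_coe_iff, and_iff_right h]
  · obtain ⟨x, hx, hq⟩ : ∃ x, P x ≠ 0 ∧ Q x = 0 := by simpa using h
    simp [renyiD_one_eq_top hP hQ hx hq, h]

lemma renyiSum_mono_right {a : ℝ} (ha : a ≤ 1) (h : ∀ x, Q' x ≤ Q x) :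
    renyiSum a P Q' ≤ renyiSum a P Q :=
  Finset.sum_le_sum fun x _ => mul_le_mul_right
    (ENNReal.rpow_le_rpow (h x) (sub_nonneg.2 ha)) _

lemma renyiSum_anti_right {a : ℝ} (ha : 1 ≤ a) (h : ∀ x, Q' x ≤ Q x) :
    renyiSum a P Q ≤ renyiSum a P Q' := by
  refine Finset.sum_le_sum fun x _ => mul_le_mul_right ?_ _
  rw [← neg_sub, ENNReal.rpow_neg, ENNReal.rpow_neg, ENNReal.inv_le_inv]
  exact ENNReal.rpow_le_rpow (h x) (sub_nonneg.2 ha)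

lemma renyiSum_const_mul_right (a : ℝ) {c : ℝ≥0∞} (h0 : c ≠ 0) (ht : c ≠ ⊤) (P Q : A → ℝ≥0∞) :
    renyiSum a P (fun x => c * Q x) = c ^ (1 - a) * renyiSum a P Q := by
  rw [renyiSum, renyiSum, Finset.mul_sum]
  refine Finset.sum_congr rfl fun x _ => ?_
  rw [mul_left_comm]
  congr 1
  by_cases hQ : Q x = ⊤
  · rcases lt_trichotomy (1 - a) 0 with h | h | h
    · simp [hQ, h0, ENNReal.top_rpow_of_neg h]
    · simp [h]
    · simp [hQ, h0, ENNReal.top_rpow_of_pos h, ENNReal.rpow_eq_zero_iff, ht]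
  · exact ENNReal.mul_rpow_of_ne_top ht hQ _

lemma renyiD_anti_right (α : ℝ≥0∞) (h : ∀ x, Q' x ≤ Q x) : renyiD α P Q ≤ renyiD α P Q' := by
  have hdiv : ∀ x, P x / Q x ≤ P x / Q' x := fun x => ENNReal.div_le_div_left (h x) _
  rcases order_cases α with rfl | rfl | ⟨a, h0, h1, rfl⟩
  · simp only [renyiD, one_ne_zero, if_false, if_true]
    exact Finset.sum_le_sum fun x _ =>
      mul_le_mul_of_nonneg_left (elog2_mono (hdiv x)) (by simp)
  · simp only [renyiD, ENNReal.top_ne_zero, ENNReal.top_ne_one, if_false, if_true]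
    exact elog2_mono (iSup_mono hdiv)
  · refine EReal.le_of_forall_lt_iff_le.1 fun d hd => ?_
    rcases lt_or_gt_of_ne h1 with h1 | h1
    · rw [renyiD_le_iff_of_lt_one h0 h1]
      exact ((renyiD_le_iff_of_lt_one h0 h1).1 hd.le).trans (renyiSum_mono_right h1.le h)
    · rw [renyiD_le_iff_of_one_lt h1]
      exact (renyiSum_anti_right h1.le h).trans ((renyiD_le_iff_of_one_lt h1).1 hd.le)

lemma kl_const_mul_right {v q : A → ℝ} {c : ℝ} (hc : c ≠ 0) (h : ∀ x, v x ≠ 0 → q x ≠ 0) :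
    kl v (fun x => c * q x) = kl v q - (∑ x, v x) * Real.logb 2 c := by
  rw [kl, kl, Finset.sum_mul, ← Finset.sum_sub_distrib]
  refine Finset.sum_congr rfl fun x _ => ?_
  by_cases hx : v x = 0
  · simp [hx]
  · rw [mul_comm c, ← div_div, Real.logb_div (div_ne_zero hx (h x hx)) hc, mul_sub]

lemma renyiD_const_mul_right (α : ℝ≥0∞) (hP : IsDist P) (hQ : ∀ x, Q x ≠ ⊤) {c d : ℝ}
    (h : renyiD α P (fun x => 2 ^ c * Q x) ≤ d) : renyiD α P Q ≤ ((d + c : ℝ) : EReal) := by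
  have hQc : ∀ x, 2 ^ c * Q x ≠ ⊤ := fun x => ENNReal.mul_ne_top (two_rpow_ne_top c) (hQ x)
  have hpow (a : ℝ) : (2 : ℝ≥0∞) ^ ((a - 1) * d) = (2 ^ c) ^ (1 - a) * 2 ^ ((a - 1) * (d + c)) := by
    rw [← ENNReal.rpow_mul, ← two_rpow_add]; congr 1; ring
  have hmul (a : ℝ) := renyiSum_const_mul_right a (two_rpow_ne_zero c) (two_rpow_ne_top c) P Q
  have hcanc (a : ℝ) {s t : ℝ≥0∞} : (2 ^ c) ^ (1 - a) * s ≤ (2 ^ c) ^ (1 - a) * t ↔ s ≤ t := by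
    rw [← ENNReal.rpow_mul]
    exact ENNReal.mul_le_mul_iff_right (two_rpow_ne_zero _) (two_rpow_ne_top _)
  rcases order_cases α with rfl | rfl | ⟨a, h0, h1, rfl⟩
  · obtain ⟨hs, h⟩ := (renyiD_one_le_iff hP.ne_top hQc).1 h
    have hs' : ∀ x, P x ≠ 0 → Q x ≠ 0 := fun x hx hq => hs x hx (by simp [hq])
    refine (renyiD_one_le_iff hP.ne_top hQ).2 ⟨hs', ?_⟩
    have h2 : ((2 : ℝ≥0∞) ^ c).toReal = 2 ^ c := by rw [← ENNReal.toReal_rpow]; simp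
    simp only [ENNReal.toReal_mul, h2] at h
    rw [kl_const_mul_right (by positivity) fun x hx => (ENNReal.toReal_ne_zero.2
        ⟨hs' x (ENNReal.toReal_ne_zero.1 hx).1, hQ x⟩), hP.sum_toReal,
      Real.logb_rpow two_pos (by norm_num)] at h
    linarith
  · rw [renyiD_top_le_iff] at h ⊢
    exact fun x => (h x).trans_eq (by rw [two_rpow_add, mul_assoc])
  · rcases lt_or_gt_of_ne h1 with h1 | h1
    · rw [renyiD_le_iff_of_lt_one h0 h1] at h ⊢
      rwa [hmul, hpow, hcanc] at h
    · rw [renyiD_le_iff_of_one_lt h1] at h ⊢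
      rwa [hmul, hpow, hcanc] at h

lemma renyiD_le_add_of_le_mul {α : ℝ≥0∞} (hP : IsDist P) (hQ : ∀ x, Q x ≠ ⊤) {c d : ℝ}
    (hle : ∀ x, Q' x ≤ 2 ^ c * Q x) (h : renyiD α P Q' ≤ d) :
    renyiD α P Q ≤ ((d + c : ℝ) : EReal) :=
  renyiD_const_mul_right α hP hQ ((renyiD_anti_right α hle).trans h)

end Divergence

section Entropy

variable {A B : Type*} [Fintype A] [Fintype B]

lemma log_sum_le {v q : A → ℝ} (hv : ∀ x, 0 ≤ v x) (hq : ∀ x, 0 ≤ q x)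
    (h : ∀ x, q x = 0 → v x = 0) :
    (∑ x, v x) * Real.logb 2 ((∑ x, v x) / ∑ x, q x) ≤ kl v q := by
  rcases (Finset.sum_nonneg fun x (_ : x ∈ Finset.univ) => hq x).eq_or_lt' with hS | hS
  · have hq0 : ∀ x, q x = 0 := fun x =>
      (Finset.sum_eq_zero_iff_of_nonneg fun x _ => hq x).1 hS x (Finset.mem_univ x)
    simp [kl, hq0, h]
  set S := ∑ x, q x
  have cancel (x : A) (t : ℝ) : q x / S * (v x / q x * t) = v x * t / S := by
    by_cases hx : q x = 0
    · simp [hx, h]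
    · field_simp
  have jensen := Real.convexOn_mul_log.map_sum_le (t := Finset.univ) (w := fun x => q x / S)
    (p := fun x => v x / q x) (fun x _ => div_nonneg (hq x) hS.le)
    (by rw [← Finset.sum_div, div_self hS.ne']) fun x _ => div_nonneg (hv x) (hq x)
  have mean : ∑ x, q x / S * (v x / q x) = (∑ x, v x) / S := by
    rw [Finset.sum_div]
    exact Finset.sum_congr rfl fun x _ => by simpa using cancel x 1
  simp only [smul_eq_mul, cancel, mean, ← Finset.sum_div] at jensen
  rw [div_mul_eq_mul_div, div_le_div_iff_of_pos_right hS] at jensen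
  simp only [kl, Real.logb, ← mul_div_assoc, ← Finset.sum_div]
  gcongr

lemma kl_nonneg {v q : A → ℝ} (hv : ∀ x, 0 ≤ v x) (hq : ∀ x, 0 ≤ q x)
    (h : ∀ x, q x = 0 → v x = 0) (hle : ∑ x, q x ≤ ∑ x, v x) : 0 ≤ kl v q := by
  refine le_trans ?_ (log_sum_le hv hq h)
  have hS : 0 ≤ ∑ x, q x := Finset.sum_nonneg fun x _ => hq x
  refine mul_nonneg (hS.trans hle) ?_
  rcases hS.eq_or_lt with hS | hS
  · simp [← hS]
  · exact Real.logb_nonneg one_lt_two ((one_le_div hS).2 hle)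

lemma sum_mul_kl_output_le {w : A → B → ℝ} (hw : ∀ x y, 0 ≤ w x y) (hw1 : ∀ x, ∑ y, w x y = 1)
    {p : A → ℝ} (hp : ∀ x, 0 ≤ p x) (hp1 : ∑ x, p x = 1) {q : B → ℝ} (hq : ∀ y, 0 ≤ q y)
    (hq1 : ∑ y, q y = 1) (hs : ∀ x y, p x ≠ 0 → q y = 0 → w x y = 0) :
    ∑ x, p x * kl (w x) (fun y => ∑ x', p x' * w x' y) ≤ ∑ x, p x * kl (w x) q := by
  set m : B → ℝ := fun y => ∑ x', p x' * w x' y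
  have hm : ∀ x y, p x * w x y ≠ 0 → m y ≠ 0 := fun x y h =>
    ((lt_of_le_of_ne (mul_nonneg (hp x) (hw x y)) h.symm).trans_le
      (Finset.single_le_sum (f := fun x => p x * w x y)
        (fun x _ => mul_nonneg (hp x) (hw x y)) (Finset.mem_univ x))).ne'
  have gibbs : 0 ≤ kl m q := by
    refine kl_nonneg (fun y => Finset.sum_nonneg fun x _ => mul_nonneg (hp x) (hw x y)) hq
      (fun y hy => Finset.sum_eq_zero fun x _ => ?_) ?_
    · by_cases hx : p x = 0
      · rw [hx, zero_mul]
      · rw [hs x y hx hy, mul_zero]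
    · rw [Finset.sum_comm]
      simp [← Finset.mul_sum, hw1, hp1, hq1]
  suffices h : ∑ x, p x * kl (w x) q - ∑ x, p x * kl (w x) m = kl m q by linarith
  simp only [kl, Finset.mul_sum, ← Finset.sum_sub_distrib]
  rw [Finset.sum_comm]
  refine Finset.sum_congr rfl fun y _ => ?_
  rw [Finset.sum_mul]
  refine Finset.sum_congr rfl fun x _ => ?_
  rw [← mul_assoc, ← mul_assoc, ← mul_sub]
  by_cases h : p x * w x y = 0
  · simp [h]
  · obtain ⟨hpx, hwx⟩ := mul_ne_zero_iff.1 h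
    have hqy : q y ≠ 0 := fun h0 => hwx (hs x y hpx h0)
    rw [Real.logb_div hwx hqy, Real.logb_div hwx (hm x y h), Real.logb_div (hm x y h) hqy]
    ring

lemma renyiSum_eq_top {P Q : A → ℝ≥0∞} (hP : ∀ x, P x ≠ ⊤) {a : ℝ} (ha : 1 < a) {x : A}
    (hx : P x ≠ 0) (hq : Q x = 0) : renyiSum a P Q = ⊤ := by
  refine ENNReal.sum_eq_top.2 ⟨x, Finset.mem_univ x, ?_⟩
  rw [hq, ENNReal.zero_rpow_of_neg (by linarith), ENNReal.mul_top]
  rwa [ne_eq, suppRpow_eq_zero_iff (hP x)]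

lemma renyiSum_le_rpow_renyiSum {P Q : A → ℝ≥0∞} (hP : ∀ x, P x ≠ ⊤) (hQ : IsDist Q) {a b : ℝ}
    (ha : 0 ≤ a) (hab : a < b) : renyiSum a P Q ≤ renyiSum b P Q ^ (a / b) := by
  have hb : 0 < b := ha.trans_lt hab
  rcases ha.eq_or_lt with rfl | ha
  · rw [zero_div, ENNReal.rpow_zero]
    refine (Finset.sum_le_sum fun x _ => ?_).trans_eq hQ
    by_cases hx : P x = 0 <;> simp [suppRpow, hx]
  by_cases hs : ∃ x, P x ≠ 0 ∧ Q x = 0 ∧ 1 < b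
  · obtain ⟨x, hx, hq, hb1⟩ := hs
    rw [renyiSum_eq_top hP hb1 hx hq, ENNReal.top_rpow_of_pos (by positivity)]
    exact le_top
  have term {c : ℝ} (x : A) (hc : 0 < c) (h : P x ≠ 0 → Q x = 0 → c < 1) :
      suppRpow (P x) c * Q x ^ (1 - c) = Q x * (P x / Q x) ^ c := by
    rw [suppRpow_of_pos _ hc]
    by_cases hx : P x = 0
    · simp [hx, hc]
    by_cases hq : Q x = 0
    · simp [hq, h hx hq]
    · rw [ENNReal.rpow_sub _ _ hq (hQ.ne_top x), ENNReal.div_rpow_of_nonneg _ _ hc.le,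
        ENNReal.rpow_one]
      simp only [div_eq_mul_inv]; ring
  push Not at hs
  have holder := ENNReal.inner_le_weight_mul_Lp_of_nonneg Finset.univ
    ((one_le_div ha).2 hab.le) Q fun x => (P x / Q x) ^ a
  rw [show ∑ x, Q x = 1 from hQ, ENNReal.one_rpow, one_mul, inv_div] at holder
  simp only [← ENNReal.rpow_mul, mul_div_cancel₀ _ ha.ne'] at holder
  refine le_trans (Finset.sum_le_sum fun x _ => ?_) (holder.trans
    (ENNReal.rpow_le_rpow (Finset.sum_le_sum fun x _ => ?_) (by positivity)))
  · exact (term x ha fun hx hq => hab.trans_le (hs x hx hq)).le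
  · rcases eq_or_ne (Q x) 0 with hq | hq
    · simp [hq]
    · exact (term x hb fun _ h => absurd h hq).ge

lemma renyiSum_one (P Q : A → ℝ≥0∞) : renyiSum 1 P Q = ∑ x, P x := by
  simp [renyiSum, suppRpow_of_pos _ one_pos]

lemma renyiD_nonneg (α : ℝ≥0∞) {P Q : A → ℝ≥0∞} (hP : IsDist P) (hQ : IsDist Q) :
    0 ≤ renyiD α P Q := by
  refine EReal.le_of_forall_lt_iff_le.1 fun d hd => EReal.coe_nonneg.2 ?_
  have hP1 : renyiSum 1 P Q = 1 := (renyiSum_one P Q).trans hP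
  have h2 {t : ℝ} : (2 : ℝ≥0∞) ^ t ≤ 1 ↔ t ≤ 0 := by
    rw [← two_rpow_le_two_rpow_iff, ENNReal.rpow_zero]
  have h2' {t : ℝ} : 1 ≤ (2 : ℝ≥0∞) ^ t ↔ 0 ≤ t := by
    rw [← two_rpow_le_two_rpow_iff, ENNReal.rpow_zero]
  rcases order_cases α with rfl | rfl | ⟨a, h0, h1, rfl⟩
  · obtain ⟨hs, h⟩ := (renyiD_one_le_iff hP.ne_top hQ.ne_top).1 hd.le
    refine le_trans (kl_nonneg (by simp) (by simp) (fun x hx => ?_) ?_) h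
    · by_contra hp
      exact hs x (fun h => hp (by simp [h]))
        ((ENNReal.toReal_eq_zero_iff _).1 hx |>.resolve_right (hQ.ne_top x))
    · rw [hP.sum_toReal, hQ.sum_toReal]
  · refine h2'.1 ?_
    calc 1 = ∑ x, P x := hP.symm
      _ ≤ ∑ x, 2 ^ d * Q x := Finset.sum_le_sum fun x _ => renyiD_top_le_iff.1 hd.le x
      _ = 2 ^ d := by rw [← Finset.mul_sum, show ∑ x, Q x = 1 from hQ, mul_one]
  · rcases lt_or_gt_of_ne h1 with h1 | h1
    · have h := ((renyiD_le_iff_of_lt_one h0 h1).1 hd.le).trans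
        (renyiSum_le_rpow_renyiSum hP.ne_top hQ h0 h1)
      rw [hP1, ENNReal.one_rpow, h2] at h
      nlinarith
    · have h := renyiSum_le_rpow_renyiSum hP.ne_top hQ zero_le_one h1
      rw [hP1, one_div, ENNReal.le_rpow_inv_iff (by positivity), ENNReal.one_rpow] at h
      have := h2'.1 (h.trans ((renyiD_le_iff_of_one_lt h1).1 hd.le))
      nlinarith

end Entropy

section Product

variable {B : Type*} [Fintype B] {n : ℕ}

lemma sum_fin_succ_arrow {M : Type*} [AddCommMonoid M] (F : (Fin (n + 1) → B) → M) :
    ∑ ys, F ys = ∑ y, ∑ ys : Fin n → B, F (Fin.cons y ys) := by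
  rw [← (Fin.consEquiv fun _ => B).sum_comp, Fintype.sum_prod_type]
  rfl

lemma IsDist.pi {P : Fin n → B → ℝ≥0∞} (hP : ∀ i, IsDist (P i)) :
    IsDist fun ys : Fin n → B => ∏ i, P i (ys i) := by
  rw [IsDist, ← Fintype.prod_sum]
  exact Finset.prod_eq_one fun i _ => hP i

lemma renyiSum_prod (a : ℝ) {P Q : Fin n → B → ℝ≥0∞} (hP : ∀ i y, P i y ≠ ⊤)
    (hQ : ∀ i y, Q i y ≠ ⊤) :
    renyiSum a (fun ys : Fin n → B => ∏ i, P i (ys i)) (fun ys => ∏ i, Q i (ys i)) =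
      ∏ i, renyiSum a (P i) (Q i) := by
  simp only [renyiSum, Fintype.prod_sum, Finset.prod_mul_distrib]
  refine Finset.sum_congr rfl fun ys _ => ?_
  rw [suppRpow_prod fun i => hP i _, ENNReal.prod_rpow_of_ne_top fun i _ => hQ i _]

lemma sum_prod_mul_sum {R : Type*} [CommSemiring R] {v : Fin n → B → R}
    (hv : ∀ i, ∑ y, v i y = 1) (u : Fin n → B → R) :
    ∑ ys : Fin n → B, (∏ i, v i (ys i)) * ∑ i, u i (ys i) = ∑ i, ∑ y, v i y * u i y := by
  induction n with
  | zero => simp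
  | succ n ih =>
    have one : ∑ ys : Fin n → B, ∏ i, v i.succ (ys i) = 1 := by
      simp [← Fintype.prod_sum, hv]
    simp only [sum_fin_succ_arrow, Fin.prod_univ_succ, Fin.sum_univ_succ, Fin.cons_zero,
      Fin.cons_succ, mul_add, Finset.sum_add_distrib, ← ih (fun i => hv i.succ)]
    congr 1
    · refine Finset.sum_congr rfl fun y _ => ?_
      rw [← Finset.sum_mul, ← Finset.mul_sum, one, mul_one]
    · simp only [mul_assoc, ← Finset.mul_sum, ← Finset.sum_mul, hv, one_mul]

lemma kl_prod {v w : Fin n → B → ℝ} (hv : ∀ i, ∑ y, v i y = 1)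
    (hs : ∀ i y, w i y = 0 → v i y = 0) :
    kl (fun ys : Fin n → B => ∏ i, v i (ys i)) (fun ys => ∏ i, w i (ys i)) =
      ∑ i, kl (v i) (w i) := by
  simp only [kl, ← sum_prod_mul_sum hv fun i y => Real.logb 2 (v i y / w i y)]
  refine Finset.sum_congr rfl fun ys _ => ?_
  by_cases h : ∏ i, v i (ys i) = 0
  · rw [h, zero_mul, zero_mul]
  · have hvy : ∀ i, v i (ys i) ≠ 0 := fun i => Finset.prod_ne_zero_iff.1 h i (Finset.mem_univ i)
    rw [← Finset.prod_div_distrib, Real.logb_prod]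
    exact fun i _ => div_ne_zero (hvy i) fun h0 => hvy i (hs i _ h0)

end Product

section Joint

variable {A B : Type*} [Fintype A] [Fintype B] {W : A → B → ℝ≥0∞} {P : A → ℝ≥0∞} {Q : B → ℝ≥0∞}

lemma IsChannel.isDist (hW : IsChannel W) (x : A) : IsDist (W x) := hW x

lemma IsChannel.ne_top (hW : IsChannel W) (x : A) (y : B) : W x y ≠ ⊤ := (hW.isDist x).ne_top y

lemma IsChannel.prodCh (hW : IsChannel W) (n : ℕ) : IsChannel (prodCh n W) :=
  fun xs => IsDist.pi fun i => hW (xs i)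

lemma IsDist.prodDist (hP : IsDist P) (n : ℕ) : IsDist (prodDist n P) :=
  IsDist.pi fun _ => hP

lemma IsDist.joint (hP : IsDist P) (hW : IsChannel W) : IsDist (joint P W) := by
  simp only [IsDist, RST.joint, Fintype.sum_prod_type, ← Finset.mul_sum, hW _, mul_one]
  exact hP

lemma IsDist.mul (hP : IsDist P) (hQ : IsDist Q) : IsDist fun p : A × B => P p.1 * Q p.2 :=
  hP.joint (W := fun _ => Q) fun _ => hQ

lemma renyiMI_joint (α : ℝ≥0∞) (hW : IsChannel W) (P : A → ℝ≥0∞) :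
    renyiMI α (joint P W) = ⨅ Q : {Q : B → ℝ≥0∞ // IsDist Q},
      renyiD α (joint P W) fun p => P p.1 * Q.1 p.2 := by
  have h : margX (joint P W) = P := by
    ext x
    simp only [margX, joint, ← Finset.mul_sum, hW x, mul_one]
  rw [renyiMI, h]

lemma renyiSum_joint (a : ℝ) (hP : IsDist P) (hW : ∀ x y, W x y ≠ ⊤) (hQ : ∀ y, Q y ≠ ⊤) :
    renyiSum a (joint P W) (fun p => P p.1 * Q p.2) = ∑ x, P x * renyiSum a (W x) Q := by
  simp only [renyiSum, Fintype.sum_prod_type, Finset.mul_sum, joint]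
  refine Finset.sum_congr rfl fun x _ => Finset.sum_congr rfl fun y _ => ?_
  by_cases hx : P x = 0
  · simp [hx]
  by_cases hy : W x y = 0
  · simp [hy]
  · rw [suppRpow, if_neg (mul_ne_zero hx hy), suppRpow, if_neg hy,
      ENNReal.mul_rpow_of_ne_top (hP.ne_top x) (hW x y),
      ENNReal.mul_rpow_of_ne_top (hP.ne_top x) (hQ y), mul_mul_mul_comm,
      ← ENNReal.rpow_add _ _ hx (hP.ne_top x), add_sub_cancel, ENNReal.rpow_one]

lemma renyiD_one_joint_le_iff (hP : IsDist P) (hW : IsChannel W) (hQ : IsDist Q) {d : ℝ} :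
    renyiD 1 (joint P W) (fun p => P p.1 * Q p.2) ≤ d ↔
      (∀ x y, P x ≠ 0 → W x y ≠ 0 → Q y ≠ 0) ∧
        ∑ x, (P x).toReal * kl (fun y => (W x y).toReal) (fun y => (Q y).toReal) ≤ d := by
  rw [renyiD_one_le_iff (hP.joint hW).ne_top (hP.mul hQ).ne_top]
  refine and_congr (by simp +contextual [joint]) (iff_of_eq (congrArg (· ≤ d) ?_))
  · simp only [kl, Fintype.sum_prod_type, Finset.mul_sum, joint, ENNReal.toReal_mul]
    refine Finset.sum_congr rfl fun x _ => Finset.sum_congr rfl fun y _ => ?_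
    by_cases hx : (P x).toReal = 0
    · simp [hx]
    · rw [mul_div_mul_left _ _ hx, mul_assoc]

lemma renyiD_joint_le (α : ℝ≥0∞) (hP : IsDist P) (hW : IsChannel W) (hQ : IsDist Q) {d : ℝ}
    (h : ∀ x, renyiD α (W x) Q ≤ d) : renyiD α (joint P W) (fun p => P p.1 * Q p.2) ≤ d := by
  have mean (c : ℝ≥0∞) : ∑ x, P x * c = c := by
    rw [← Finset.sum_mul, show ∑ x, P x = 1 from hP, one_mul]
  rcases order_cases α with rfl | rfl | ⟨a, h0, h1, rfl⟩
  · have h' := fun x => (renyiD_one_le_iff (hW.isDist x).ne_top hQ.ne_top).1 (h x)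
    refine (renyiD_one_joint_le_iff hP hW hQ).2 ⟨fun x y _ => (h' x).1 y, ?_⟩
    calc _ ≤ ∑ x, (P x).toReal * d :=
          Finset.sum_le_sum fun x _ => mul_le_mul_of_nonneg_left (h' x).2 ENNReal.toReal_nonneg
      _ = d := by rw [← Finset.sum_mul, hP.sum_toReal, one_mul]
  · simp only [renyiD_top_le_iff, joint, Prod.forall] at h ⊢
    exact fun x y => (mul_le_mul_right (h x y) _).trans_eq (mul_left_comm _ _ _)
  · have hs := renyiSum_joint (W := W) (Q := Q) a hP hW.ne_top hQ.ne_top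
    rcases lt_or_gt_of_ne h1 with h1 | h1
    · simp only [renyiD_le_iff_of_lt_one h0 h1] at h ⊢
      rw [hs, ← mean (2 ^ _)]
      exact Finset.sum_le_sum fun x _ => mul_le_mul_right (h x) _
    · simp only [renyiD_le_iff_of_one_lt h1] at h ⊢
      rw [hs, ← mean (2 ^ _)]
      exact Finset.sum_le_sum fun x _ => mul_le_mul_right (h x) _

lemma renyiCap_le_of_forall_renyiD_le {α : ℝ≥0∞} (hW : IsChannel W) (hQ : IsDist Q) {d : ℝ}
    (h : ∀ x, renyiD α (W x) Q ≤ d) : renyiCap α W ≤ d := by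
  refine iSup_le fun P => ?_
  rw [renyiMI_joint α hW]
  exact iInf_le_of_le ⟨Q, hQ⟩ (renyiD_joint_le α P.2 hW hQ h)

lemma renyiMI_le_renyiCap (α : ℝ≥0∞) (hP : IsDist P) : renyiMI α (joint P W) ≤ renyiCap α W :=
  le_iSup (fun P : {P : A → ℝ≥0∞ // IsDist P} => renyiMI α (joint P.1 W)) ⟨P, hP⟩

lemma exists_renyiD_joint_le_of_renyiCap_lt {α : ℝ≥0∞} (hP : IsDist P) (hW : IsChannel W) {d : ℝ}
    (h : renyiCap α W < d) : ∃ Q : B → ℝ≥0∞, IsDist Q ∧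
      renyiD α (joint P W) (fun p => P p.1 * Q p.2) ≤ d := by
  have hMI := (renyiMI_le_renyiCap α hP).trans_lt h
  rw [renyiMI_joint α hW P] at hMI
  obtain ⟨Q, hQ⟩ := iInf_lt_iff.1 hMI
  exact ⟨Q.1, Q.2, hQ.le⟩

end Joint

section Additivity

variable {A B : Type*} [Fintype A] [Fintype B] {W : A → B → ℝ≥0∞} {P : A → ℝ≥0∞} {n : ℕ}

/-- The mixture `∑ P(x) W(y|x)^a` of powers of the rows of a channel, which determines the Rényi
mutual information of order `a`. -/
def powerMix (a : ℝ) (P : A → ℝ≥0∞) (W : A → B → ℝ≥0∞) (y : B) : ℝ≥0∞ :=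
  ∑ x, P x * suppRpow (W x y) a

lemma renyiSum_joint_eq_powerMix (a : ℝ) (hP : IsDist P) (hW : ∀ x y, W x y ≠ ⊤)
    {Q : B → ℝ≥0∞} (hQ : ∀ y, Q y ≠ ⊤) :
    renyiSum a (joint P W) (fun p => P p.1 * Q p.2) = ∑ y, powerMix a P W y * Q y ^ (1 - a) := by
  rw [renyiSum_joint a hP hW hQ]
  simp only [renyiSum, powerMix, Finset.mul_sum, Finset.sum_mul, mul_assoc]
  exact Finset.sum_comm

lemma powerMix_prodCh (a : ℝ) (P : A → ℝ≥0∞) (hW : ∀ x y, W x y ≠ ⊤) (ys : Fin n → B) :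
    powerMix a (prodDist n P) (prodCh n W) ys = ∏ i, powerMix a P W (ys i) := by
  simp only [powerMix, Fintype.prod_sum, Finset.prod_mul_distrib, prodDist, prodCh,
    suppRpow_prod fun _ => hW _ _]

lemma isDist_div_sum {f : B → ℝ≥0∞} (h0 : ∑ y, f y ≠ 0) (ht : ∑ y, f y ≠ ⊤) :
    IsDist fun y => f y / ∑ y, f y := by
  simp only [IsDist, div_eq_mul_inv, ← Finset.sum_mul]
  exact ENNReal.mul_inv_cancel h0 ht

lemma sum_mul_rpow_div_sum (k : B → ℝ≥0∞) (s : ℝ) {f : B → ℝ≥0∞} (h0 : ∑ y, f y ≠ 0)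
    (ht : ∑ y, f y ≠ ⊤) :
    ∑ y, k y * f y ^ s = (∑ y, k y * (f y / ∑ y, f y) ^ s) * (∑ y, f y) ^ s := by
  rw [Finset.sum_mul]
  refine Finset.sum_congr rfl fun y _ => ?_
  have hf : f y ≠ ⊤ := ENNReal.sum_ne_top.1 ht y (Finset.mem_univ y)
  rw [mul_assoc, ← ENNReal.mul_rpow_of_ne_top (ENNReal.div_ne_top hf h0) ht,
    ENNReal.div_mul_cancel h0 ht]

lemma sum_prod_mul_rpow_le {k : B → ℝ≥0∞} {K : ℝ≥0∞} {s : ℝ} (hs : 0 < s)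
    (h : ∀ Q : B → ℝ≥0∞, IsDist Q → ∑ y, k y * Q y ^ s ≤ K)
    {F : (Fin n → B) → ℝ≥0∞} (hF : ∀ ys, F ys ≠ ⊤) :
    ∑ ys : Fin n → B, (∏ i, k (ys i)) * F ys ^ s ≤ K ^ n * (∑ ys, F ys) ^ s := by
  have single {f : B → ℝ≥0∞} (hf : ∑ y, f y ≠ ⊤) : ∑ y, k y * f y ^ s ≤ K * (∑ y, f y) ^ s := by
    by_cases h0 : ∑ y, f y = 0
    · have : ∀ y, f y = 0 := by simpa using h0
      simp [this, hs]
    · rw [sum_mul_rpow_div_sum k s h0 hf]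
      exact mul_le_mul_left (h _ (isDist_div_sum h0 hf)) _
  induction n with
  | zero => simp
  | succ n ih =>
    simp only [sum_fin_succ_arrow, Fin.prod_univ_succ, Fin.cons_zero, Fin.cons_succ, mul_assoc,
      ← Finset.mul_sum]
    calc _ ≤ ∑ y, k y * (K ^ n * (∑ ys : Fin n → B, F (Fin.cons y ys)) ^ s) := by
          gcongr with y; exact ih fun ys => hF _
      _ = K ^ n * ∑ y, k y * (∑ ys : Fin n → B, F (Fin.cons y ys)) ^ s := by
          simp only [Finset.mul_sum, mul_left_comm]
      _ ≤ K ^ n * (K * (∑ y, ∑ ys : Fin n → B, F (Fin.cons y ys)) ^ s) := by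
          gcongr; exact single (by simp [hF])
      _ = _ := by rw [pow_succ, mul_assoc]

lemma le_sum_prod_mul_rpow {k : B → ℝ≥0∞} (hk : ∃ y, k y ≠ 0) {K : ℝ≥0∞} {s : ℝ} (hs : s < 0)
    (h : ∀ Q : B → ℝ≥0∞, IsDist Q → K ≤ ∑ y, k y * Q y ^ s)
    {F : (Fin n → B) → ℝ≥0∞} (hF : ∀ ys, F ys ≠ ⊤) :
    K ^ n * (∑ ys, F ys) ^ s ≤ ∑ ys : Fin n → B, (∏ i, k (ys i)) * F ys ^ s := by
  have single {f : B → ℝ≥0∞} (hf : ∑ y, f y ≠ ⊤) : K * (∑ y, f y) ^ s ≤ ∑ y, k y * f y ^ s := by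
    by_cases h0 : ∑ y, f y = 0
    · obtain ⟨y, hy⟩ := hk
      have : ∀ y, f y = 0 := by simpa using h0
      refine le_top.trans (ENNReal.sum_eq_top.2 ⟨y, Finset.mem_univ y, ?_⟩).ge
      rw [this y, ENNReal.zero_rpow_of_neg hs, ENNReal.mul_top hy]
    · rw [sum_mul_rpow_div_sum k s h0 hf]
      exact mul_le_mul_left (h _ (isDist_div_sum h0 hf)) _
  induction n with
  | zero => simp
  | succ n ih =>
    simp only [sum_fin_succ_arrow, Fin.prod_univ_succ, Fin.cons_zero, Fin.cons_succ, mul_assoc,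
      ← Finset.mul_sum]
    calc _ = K ^ n * (K * (∑ y, ∑ ys : Fin n → B, F (Fin.cons y ys)) ^ s) := by
          rw [pow_succ, mul_assoc]
      _ ≤ K ^ n * ∑ y, k y * (∑ ys : Fin n → B, F (Fin.cons y ys)) ^ s := by
          gcongr; exact single (by simp [hF])
      _ = ∑ y, k y * (K ^ n * (∑ ys : Fin n → B, F (Fin.cons y ys)) ^ s) := by
          simp only [Finset.mul_sum, mul_left_comm]
      _ ≤ _ := by gcongr with y; exact ih fun ys => hF _

lemma exists_powerMix_ne_zero (a : ℝ) (hP : IsDist P) (hW : IsChannel W) :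
    ∃ y, powerMix a P W y ≠ 0 := by
  obtain ⟨⟨x, y⟩, h⟩ := (hP.joint hW).exists_ne_zero
  obtain ⟨hx, hy⟩ := mul_ne_zero_iff.1 h
  refine ⟨y, fun h0 => ?_⟩
  have := Finset.sum_eq_zero_iff.1 h0 x (Finset.mem_univ x)
  simp [hx, hy, suppRpow_eq_zero_iff (hW.ne_top x y)] at this

lemma two_rpow_nat_mul (d : ℝ) : (2 : ℝ≥0∞) ^ (n * d) = (2 ^ d) ^ n := by
  rw [← ENNReal.rpow_natCast, ← ENNReal.rpow_mul, mul_comm]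

lemma le_renyiD_joint_prod_of_ne_one {a : ℝ} (h0 : 0 ≤ a) (h1 : a ≠ 1) (hP : IsDist P)
    (hW : IsChannel W) {d : ℝ}
    (h : ∀ Q : B → ℝ≥0∞, IsDist Q →
      d ≤ renyiD (ENNReal.ofReal a) (joint P W) fun p => P p.1 * Q p.2)
    {Q : (Fin n → B) → ℝ≥0∞} (hQ : IsDist Q) :
    ((n * d : ℝ) : EReal) ≤ renyiD (ENNReal.ofReal a) (joint (prodDist n P) (prodCh n W))
      fun p => prodDist n P p.1 * Q p.2 := by
  have hsum : renyiSum a (joint (prodDist n P) (prodCh n W))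
      (fun p => prodDist n P p.1 * Q p.2) =
      ∑ ys, (∏ i, powerMix a P W (ys i)) * Q ys ^ (1 - a) := by
    rw [renyiSum_joint_eq_powerMix a (hP.prodDist n) (hW.prodCh n).ne_top hQ.ne_top]
    simp only [powerMix_prodCh a P hW.ne_top]
  have hpow : (2 : ℝ≥0∞) ^ ((a - 1) * (n * d)) =
      (2 ^ ((a - 1) * d)) ^ n * (∑ ys, Q ys) ^ (1 - a) := by
    rw [show ∑ ys, Q ys = 1 from hQ, ENNReal.one_rpow, mul_one, mul_left_comm, two_rpow_nat_mul]
  rcases lt_or_gt_of_ne h1 with h1 | h1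
  · rw [coe_le_renyiD_iff_of_lt_one h0 h1, hsum, hpow]
    refine sum_prod_mul_rpow_le (sub_pos.2 h1) (fun Q hQ => ?_) hQ.ne_top
    rw [← renyiSum_joint_eq_powerMix a hP hW.ne_top hQ.ne_top]
    exact (coe_le_renyiD_iff_of_lt_one h0 h1).1 (h Q hQ)
  · rw [coe_le_renyiD_iff_of_one_lt h1, hsum, hpow]
    refine le_sum_prod_mul_rpow (exists_powerMix_ne_zero a hP hW) (sub_neg.2 h1)
      (fun Q hQ => ?_) hQ.ne_top
    rw [← renyiSum_joint_eq_powerMix a hP hW.ne_top hQ.ne_top]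
    exact (coe_le_renyiD_iff_of_one_lt h1).1 (h Q hQ)

/-- The largest entry `max W(y|x)` of each column of a channel over the inputs in the support of
`P`, which plays the role of `powerMix` at order `∞`. -/
def supportMax (P : A → ℝ≥0∞) (W : A → B → ℝ≥0∞) (y : B) : ℝ≥0∞ := ⨆ x, ⨆ _ : P x ≠ 0, W x y

lemma renyiD_top_joint_le_iff (hP : ∀ x, P x ≠ ⊤) (Q : B → ℝ≥0∞) {d : ℝ} :
    renyiD ⊤ (joint P W) (fun p => P p.1 * Q p.2) ≤ d ↔ ∀ y, supportMax P W y ≤ 2 ^ d * Q y := by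
  simp only [renyiD_top_le_iff, joint, Prod.forall, supportMax, iSup_le_iff]
  rw [forall_comm]
  refine forall_congr' fun y => forall_congr' fun x => ?_
  by_cases hx : P x = 0
  · simp [hx]
  · rw [mul_left_comm, ENNReal.mul_le_mul_iff_right hx (hP x), imp_iff_right hx]

lemma prod_supportMax_le [Nonempty A] (P : A → ℝ≥0∞) (W : A → B → ℝ≥0∞) (ys : Fin n → B) :
    ∏ i, supportMax P W (ys i) ≤ supportMax (prodDist n P) (prodCh n W) ys := by
  have attained : ∀ y, ∃ x, supportMax P W y = ⨆ _ : P x ≠ 0, W x y := fun y =>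
    (exists_eq_ciSup_of_finite (f := fun x => ⨆ _ : P x ≠ 0, W x y)).imp fun _ => Eq.symm
  choose x hx using attained
  by_cases h : ∀ i, P (x (ys i)) ≠ 0
  · refine le_iSup₂_of_le (fun i => x (ys i)) (Finset.prod_ne_zero_iff.2 fun i _ => h i) ?_
    exact (Finset.prod_congr rfl fun i _ => by rw [hx, iSup_pos (h i)]).le
  · push Not at h
    obtain ⟨i, hi⟩ := h
    rw [Finset.prod_eq_zero (Finset.mem_univ i) (by simp [hx, hi])]
    exact zero_le

lemma exists_two_rpow_eq {s : ℝ≥0∞} (h0 : s ≠ 0) (ht : s ≠ ⊤) : ∃ d : ℝ, 2 ^ d = s :=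
  ⟨Real.logb 2 s.toReal, by
    rw [two_rpow_eq_ofReal, Real.rpow_logb two_pos (by norm_num) (ENNReal.toReal_pos h0 ht),
      ENNReal.ofReal_toReal ht]⟩

lemma sum_supportMax_ne_zero (hP : IsDist P) (hW : IsChannel W) :
    ∑ y, supportMax P W y ≠ 0 := fun h0 => by
  have hk : ∀ y, supportMax P W y = 0 := by simpa using h0
  obtain ⟨⟨x, y⟩, hxy⟩ := (hP.joint hW).exists_ne_zero
  obtain ⟨hx, hy⟩ := mul_ne_zero_iff.1 hxy
  exact hy (le_zero_iff.1 ((le_iSup₂_of_le x hx le_rfl).trans_eq (hk y)))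

lemma sum_supportMax_ne_top (P : A → ℝ≥0∞) (hW : IsChannel W) : ∑ y, supportMax P W y ≠ ⊤ :=
  ENNReal.sum_ne_top.2 fun y _ => ne_top_of_le_ne_top ENNReal.one_ne_top
    (iSup₂_le fun x _ => (hW.isDist x).le_one y)

lemma le_renyiD_joint_prod_top (hP : IsDist P) (hW : IsChannel W) {d : ℝ}
    (h : ∀ Q : B → ℝ≥0∞, IsDist Q → d ≤ renyiD ⊤ (joint P W) fun p => P p.1 * Q p.2)
    {Q : (Fin n → B) → ℝ≥0∞} (hQ : IsDist Q) :
    ((n * d : ℝ) : EReal) ≤ renyiD ⊤ (joint (prodDist n P) (prodCh n W))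
      fun p => prodDist n P p.1 * Q p.2 := by
  have : Nonempty A := ⟨hP.exists_ne_zero.choose⟩
  have hle : (2 : ℝ≥0∞) ^ d ≤ ∑ y, supportMax P W y := by
    have h0 := sum_supportMax_ne_zero hP hW
    have ht := sum_supportMax_ne_top P hW
    obtain ⟨e, he⟩ := exists_two_rpow_eq h0 ht
    rw [← he, two_rpow_le_two_rpow_iff, ← EReal.coe_le_coe_iff]
    refine (h _ (isDist_div_sum h0 ht)).trans ?_
    refine (renyiD_top_joint_le_iff hP.ne_top (fun y => _ / _)).2 fun y => ?_
    rw [he]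
    exact (ENNReal.mul_div_cancel h0 ht).ge
  refine EReal.le_of_forall_lt_iff_le.1 fun z hz => EReal.coe_le_coe_iff.2 ?_
  rw [← two_rpow_le_two_rpow_iff, two_rpow_nat_mul]
  calc _ ≤ (∑ y, supportMax P W y) ^ n := by gcongr
    _ = ∑ ys : Fin n → B, ∏ i, supportMax P W (ys i) := by rw [Fintype.sum_pow]
    _ ≤ ∑ ys, 2 ^ z * Q ys := Finset.sum_le_sum fun ys _ => (prod_supportMax_le P W ys).trans
        ((renyiD_top_joint_le_iff (hP.prodDist n).ne_top Q).1 hz.le ys)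
    _ = 2 ^ z := by rw [← Finset.mul_sum, show ∑ ys, Q ys = 1 from hQ, mul_one]

lemma le_sum_mul_kl_output (hP : IsDist P) (hW : IsChannel W) {d : ℝ}
    (h : ∀ Q : B → ℝ≥0∞, IsDist Q → d ≤ renyiD 1 (joint P W) fun p => P p.1 * Q p.2) :
    d ≤ ∑ x, (P x).toReal * kl (fun y => (W x y).toReal)
      fun y => ∑ x', (P x').toReal * (W x' y).toReal := by
  have hm : IsDist fun y => ∑ x, P x * W x y := by
    rw [IsDist, Finset.sum_comm]
    simp only [← Finset.mul_sum, hW _, mul_one]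
    exact hP
  have hmr (y : B) : (∑ x, P x * W x y).toReal = ∑ x, (P x).toReal * (W x y).toReal := by
    rw [ENNReal.toReal_sum fun x _ => ENNReal.mul_ne_top (hP.ne_top x) (hW.ne_top x y)]
    simp only [ENNReal.toReal_mul]
  refine EReal.coe_le_coe_iff.1 ((h _ hm).trans ?_)
  rw [renyiD_one_joint_le_iff hP hW hm]
  simp only [hmr]
  exact ⟨fun x y hx hy h0 => mul_ne_zero hx hy (Finset.sum_eq_zero_iff.1 h0 x (by simp)), le_rfl⟩

lemma prod_mul_kl_prod_output {p : A → ℝ} (hp : ∀ x, 0 ≤ p x) {w : A → B → ℝ}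
    (hw : ∀ x y, 0 ≤ w x y) (hw1 : ∀ x, ∑ y, w x y = 1) (xs : Fin n → A) :
    (∏ i, p (xs i)) * kl (fun ys : Fin n → B => ∏ i, w (xs i) (ys i))
        (fun ys => ∑ xs' : Fin n → A, (∏ i, p (xs' i)) * ∏ i, w (xs' i) (ys i)) =
      (∏ i, p (xs i)) * ∑ i, kl (w (xs i)) fun y => ∑ x, p x * w x y := by
  by_cases hxs : ∏ i, p (xs i) = 0
  · simp [hxs]
  have hm (ys : Fin n → B) : ∑ xs' : Fin n → A, (∏ i, p (xs' i)) * ∏ i, w (xs' i) (ys i) =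
      ∏ i, ∑ x, p x * w x (ys i) := by
    simp only [Fintype.prod_sum, Finset.prod_mul_distrib]
  simp only [hm]
  rw [kl_prod (w := fun _ y => ∑ x, p x * w x y) fun i => hw1 (xs i)]
  intro i y h0
  have := (Finset.sum_eq_zero_iff_of_nonneg fun x _ => mul_nonneg (hp x) (hw x y)).1 h0
    (xs i) (Finset.mem_univ _)
  exact (mul_eq_zero.1 this).resolve_left (Finset.prod_ne_zero_iff.1 hxs i (Finset.mem_univ i))

lemma le_renyiD_joint_prod_one (hP : IsDist P) (hW : IsChannel W) {d : ℝ}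
    (h : ∀ Q : B → ℝ≥0∞, IsDist Q → d ≤ renyiD 1 (joint P W) fun p => P p.1 * Q p.2)
    {Q : (Fin n → B) → ℝ≥0∞} (hQ : IsDist Q) :
    ((n * d : ℝ) : EReal) ≤ renyiD 1 (joint (prodDist n P) (prodCh n W))
      fun p => prodDist n P p.1 * Q p.2 := by
  set p : A → ℝ := fun x => (P x).toReal
  set w : A → B → ℝ := fun x y => (W x y).toReal
  refine EReal.le_of_forall_lt_iff_le.1 fun z hz => EReal.coe_le_coe_iff.2 ?_
  obtain ⟨hs, hz⟩ := (renyiD_one_joint_le_iff (hP.prodDist n) (hW.prodCh n) hQ).1 hz.le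
  have hWn := fun xs => ((hW.prodCh n).isDist xs).sum_toReal
  have hPn := (hP.prodDist n).sum_toReal
  simp only [prodDist, prodCh, ENNReal.toReal_prod] at hz hWn hPn
  calc n * d ≤ ∑ _i : Fin n, ∑ x, p x * kl (w x) fun y => ∑ x', p x' * w x' y := by
        simpa using mul_le_mul_of_nonneg_left (le_sum_mul_kl_output hP hW h) n.cast_nonneg
    _ = ∑ xs : Fin n → A, (∏ i, p (xs i)) * ∑ i, kl (w (xs i)) fun y => ∑ x', p x' * w x' y :=
        (sum_prod_mul_sum (fun _ => hP.sum_toReal) fun _ x => kl (w x) _).symm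
    _ = ∑ xs : Fin n → A, (∏ i, p (xs i)) * kl (fun ys : Fin n → B => ∏ i, w (xs i) (ys i))
          (fun ys => ∑ xs' : Fin n → A, (∏ i, p (xs' i)) * ∏ i, w (xs' i) (ys i)) :=
        Finset.sum_congr rfl fun xs _ => (prod_mul_kl_prod_output (fun x => (P x).toReal_nonneg)
          (fun x y => (W x y).toReal_nonneg) (fun x => (hW.isDist x).sum_toReal) xs).symm
    _ ≤ z := by
      refine (sum_mul_kl_output_le (fun _ _ => by positivity) hWn (fun _ => by positivity) hPn
        (fun _ => by positivity) hQ.sum_toReal fun xs ys hx hq => ?_).trans hz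
      by_contra hw
      refine hs xs ys (fun h0 => hx ?_) (fun h0 => hw ?_)
        (((ENNReal.toReal_eq_zero_iff _).1 hq).resolve_right (hQ.ne_top ys))
      · rw [← ENNReal.toReal_prod, show ∏ i, P (xs i) = 0 from h0, ENNReal.toReal_zero]
      · rw [← ENNReal.toReal_prod, show ∏ i, W (xs i) (ys i) = 0 from h0, ENNReal.toReal_zero]

lemma nat_mul_renyiMI_le (α : ℝ≥0∞) (hP : IsDist P) (hW : IsChannel W) {d : ℝ}
    (h : d ≤ renyiMI α (joint P W)) :
    ((n * d : ℝ) : EReal) ≤ renyiMI α (joint (prodDist n P) (prodCh n W)) := by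
  rw [renyiMI_joint α hW, le_iInf_iff] at h
  rw [renyiMI_joint α (hW.prodCh n)]
  replace h := fun (Q : B → ℝ≥0∞) (hQ : IsDist Q) => h ⟨Q, hQ⟩
  refine le_iInf fun Q => ?_
  rcases order_cases α with rfl | rfl | ⟨a, h0, h1, rfl⟩
  · exact le_renyiD_joint_prod_one hP hW h Q.2
  · exact le_renyiD_joint_prod_top hP hW h Q.2
  · exact le_renyiD_joint_prod_of_ne_one h0 h1 hP hW h Q.2

lemma renyiCap_le_div_of_prodCh (α : ℝ≥0∞) (hW : IsChannel W) (hn : 0 < n) {t : ℝ}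
    (h : renyiCap α (prodCh n W) ≤ t) : renyiCap α W ≤ ((t / n : ℝ) : EReal) := by
  refine iSup_le fun P => EReal.ge_of_forall_gt_iff_ge.1 fun d hd => ?_
  have := (nat_mul_renyiMI_le (n := n) α P.2 hW hd.le).trans
    ((renyiMI_le_renyiCap α (P.2.prodDist n)).trans h)
  rw [EReal.coe_le_coe_iff] at this ⊢
  rwa [le_div_iff₀' (by exact_mod_cast hn)]

end Additivity

section Converse

variable {A B : Type*} [Fintype A] [Fintype B] {V W N : A → B → ℝ≥0∞} {c r : ℝ}

lemma IsSimulation.isChannel (h : IsSimulation c N) : IsChannel N := by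
  obtain ⟨m, M, PK, E, D, -, -, hPK, hE, hD, hN⟩ := h
  intro x
  calc ∑ y, N x y = ∑ k, PK k * ∑ j, E x k j * ∑ y, D j k y := by
        simp only [hN, Finset.mul_sum, mul_assoc]
        rw [Finset.sum_comm]
        exact Finset.sum_congr rfl fun k _ => Finset.sum_comm
    _ = 1 := by simp only [hD, hE, hPK, mul_one]

lemma IsSimulation.exists_le_mul (h : IsSimulation c N) :
    ∃ Q : B → ℝ≥0∞, IsDist Q ∧ ∀ x y, N x y ≤ 2 ^ c * Q y := by
  obtain ⟨m, M, PK, E, D, hM, hc, hPK, hE, hD, hN⟩ := h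
  have hM0 : (M : ℝ≥0∞) ≠ 0 := by exact_mod_cast hM.ne'
  have hMt : (M : ℝ≥0∞) ≠ ⊤ := ENNReal.natCast_ne_top M
  have hMc : (M : ℝ≥0∞) ≤ 2 ^ c := by
    rw [two_rpow_eq_ofReal, ← ENNReal.ofReal_natCast]
    exact ENNReal.ofReal_le_ofReal
      ((Real.logb_le_iff_le_rpow one_lt_two (by exact_mod_cast hM)).1 hc)
  refine ⟨fun y => (M : ℝ≥0∞)⁻¹ * ∑ k, ∑ j, PK k * D j k y, ?_, fun x y => ?_⟩
  · calc ∑ y, (M : ℝ≥0∞)⁻¹ * ∑ k, ∑ j, PK k * D j k y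
        = (M : ℝ≥0∞)⁻¹ * ∑ k, ∑ j, PK k * ∑ y, D j k y := by
          simp only [← Finset.mul_sum, Finset.sum_comm (γ := B)]
      _ = 1 := by simp [hD, ← Finset.mul_sum, hPK, ENNReal.inv_mul_cancel hM0 hMt]
  · calc N x y ≤ ∑ k, ∑ j, PK k * D j k y := by
          rw [hN]
          gcongr with k _ j
          exact mul_le_of_le_one_right' (IsDist.le_one (hE x k) j)
      _ = M * ((M : ℝ≥0∞)⁻¹ * ∑ k, ∑ j, PK k * D j k y) := by
          rw [← mul_assoc, ENNReal.mul_inv_cancel hM0 hMt, one_mul]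
      _ ≤ _ := by gcongr

lemma IsSimulation.renyiCap_le {α : ℝ≥0∞} (hN : IsSimulation c N) (hV : IsChannel V) {t : ℝ}
    (h : ∀ x, renyiD α (V x) (N x) ≤ t) : renyiCap α V ≤ ((t + c : ℝ) : EReal) := by
  obtain ⟨Q, hQ, hle⟩ := hN.exists_le_mul
  exact renyiCap_le_of_forall_renyiD_le hV hQ fun x =>
    renyiD_le_add_of_le_mul (hV.isDist x) hQ.ne_top (hle x) (h x)

lemma simD_nonneg [Nonempty A] (α : ℝ≥0∞) (hV : IsChannel V) (c : ℝ) : 0 ≤ simD α V c := by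
  inhabit A
  exact le_iInf fun N => le_iSup_of_le default
    (renyiD_nonneg α (hV.isDist _) (N.2.isChannel.isDist _))

lemma Esc_nonneg [Nonempty A] (α : ℝ≥0∞) (hW : IsChannel W) (r : ℝ) : 0 ≤ Esc α W r :=
  le_iInf fun c => le_limsup_of_frequently_le <| Frequently.of_forall fun n =>
    mul_nonneg (by positivity) (simD_nonneg α (hW.prodCh n) _)

lemma mul_renyiCap_sub_le_Esc {α β : ℝ≥0∞} {k : ℝ} (hk : 0 < k) (hW : IsChannel W)
    (h : ∀ n {P Q : (Fin n → B) → ℝ≥0∞}, IsDist P → IsDist Q → ∀ t : ℝ,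
      renyiD α P Q ≤ t → renyiD β P Q ≤ ((t / k : ℝ) : EReal)) :
    (k : EReal) * (renyiCap β W - r) ≤ Esc α W r := by
  refine EReal.le_of_forall_lt_iff_le.1 fun z hz => ?_
  obtain ⟨c, hc⟩ := iInf_lt_iff.1 hz
  rw [← inv_inv k, inv_mul_le_coe_iff_of_pos (inv_pos.2 hk), inv_mul_eq_div,
    EReal.sub_le_iff_le_add (by simp) (by simp), ← EReal.coe_add]
  refine EReal.le_of_forall_lt_iff_le.1 fun w hw => ?_
  have hrate : limsup (fun n : ℕ => ((c.1 n / n : ℝ) : EReal)) atTop < ((w - z / k : ℝ) : EReal) :=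
    c.2.2.trans_lt (EReal.coe_lt_coe_iff.2 (by linarith [EReal.coe_lt_coe_iff.1 hw]))
  obtain ⟨n, hsim, hcn, hn⟩ := ((eventually_lt_of_limsup_lt hc).and
    ((eventually_lt_of_limsup_lt hrate).and (eventually_gt_atTop 0))).exists
  have hn' : (0 : ℝ) < n := Nat.cast_pos.2 hn
  rw [one_div] at hsim
  obtain ⟨N, hN⟩ := iInf_lt_iff.1 ((inv_mul_lt_coe_iff_of_pos hn').1 hsim)
  have hcap := N.2.renyiCap_le (hW.prodCh n) fun x => h n ((hW.prodCh n).isDist x)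
    (N.2.isChannel.isDist x) _ ((le_iSup (fun x => renyiD α _ (N.1 x)) x).trans hN.le)
  refine (renyiCap_le_div_of_prodCh β hW hn hcap).trans (EReal.coe_le_coe_iff.2 ?_)
  have := EReal.coe_lt_coe_iff.1 hcn
  rw [add_div, mul_div_assoc, mul_div_cancel_left₀ _ hn'.ne']
  linarith

lemma renyiCap_sub_le_Esc (α : ℝ≥0∞) (hW : IsChannel W) (r : ℝ) :
    renyiCap α W - r ≤ Esc α W r := by
  simpa using mul_renyiCap_sub_le_Esc (α := α) one_pos hW (r := r) fun _ _ _ _ _ => by simp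

lemma renyiD_le_div_of_lt {P Q : A → ℝ≥0∞} (hP : ∀ x, P x ≠ ⊤) (hQ : IsDist Q) {a b t : ℝ}
    (ha : 0 < a) (hab : a < b) (hb : b < 1) (h : renyiD (ENNReal.ofReal a) P Q ≤ t) :
    renyiD (ENNReal.ofReal b) P Q ≤ ((t / (a * (1 - b) / (b * (1 - a))) : ℝ) : EReal) := by
  rw [renyiD_le_iff_of_lt_one ha.le (hab.trans hb)] at h
  have hb0 := ha.trans hab
  rw [renyiD_le_iff_of_lt_one hb0.le hb]
  have h' := ENNReal.rpow_le_rpow (h.trans (renyiSum_le_rpow_renyiSum hP hQ ha.le hab))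
    (z := b / a) (by positivity)
  rw [← ENNReal.rpow_mul, ← ENNReal.rpow_mul, div_mul_div_cancel₀ hb0.ne',
    div_self ha.ne', ENNReal.rpow_one] at h'
  convert h' using 2
  have := (sub_pos.2 hb).ne'
  have := (sub_pos.2 (hab.trans hb)).ne'
  field_simp
  ring

lemma mul_renyiCap_sub_le_Esc_of_lt_one [Nonempty A] {a b : ℝ} (ha : 0 < a) (ha1 : a < 1)
    (hab : a ≤ b) (hb : b ≤ 1) (hW : IsChannel W) (r : ℝ) :
    (((a * (1 - b)) / (b * (1 - a)) : ℝ) : EReal) * (renyiCap (ENNReal.ofReal b) W - r) ≤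
      Esc (ENNReal.ofReal a) W r := by
  rcases hab.eq_or_lt with rfl | hab
  · rw [div_self (mul_pos ha (sub_pos.2 ha1)).ne', EReal.coe_one, one_mul]
    exact renyiCap_sub_le_Esc _ hW r
  rcases hb.eq_or_lt with rfl | hb
  · simpa using Esc_nonneg (ENNReal.ofReal a) hW r
  · exact mul_renyiCap_sub_le_Esc (div_pos (mul_pos ha (sub_pos.2 hb))
      (mul_pos (ha.trans hab) (sub_pos.2 ha1))) hW fun n P Q hP hQ t h =>
        renyiD_le_div_of_lt hP.ne_top hQ ha hab hb h

end Converse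

section RejectionSampling

lemma two_mul_inv_le_inv_add (t z : ℝ≥0∞) (h0 : t ≠ 0) (ht : t ≠ ⊤) :
    2 * t⁻¹ ≤ z⁻¹ + z * (t⁻¹ * t⁻¹) := by
  rcases eq_or_ne z 0 with rfl | hz0
  · simp
  rcases eq_or_ne z ⊤ with rfl | hzt
  · simp [ENNReal.top_mul, ht]
  lift t to ℝ≥0 using ht
  lift z to ℝ≥0 using hzt
  norm_cast at h0 hz0
  rw [← ENNReal.coe_inv h0, ← ENNReal.coe_inv hz0]
  norm_cast
  rw [← NNReal.coe_le_coe]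
  push_cast
  have hz : (0 : ℝ) < z := NNReal.coe_pos.2 (pos_iff_ne_zero.2 hz0)
  have : (z : ℝ)⁻¹ + z * ((t : ℝ)⁻¹ * (t : ℝ)⁻¹) - 2 * (t : ℝ)⁻¹ =
      z * ((z : ℝ)⁻¹ - (t : ℝ)⁻¹) ^ 2 := by field_simp; ring
  linarith [mul_nonneg hz.le (sq_nonneg ((z : ℝ)⁻¹ - (t : ℝ)⁻¹))]

lemma inv_le_sum_mul_inv {ι : Type*} [Fintype ι] {p z : ι → ℝ≥0∞} (hp : ∑ i, p i = 1) {t : ℝ≥0∞}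
    (h0 : t ≠ 0) (ht : t ≠ ⊤) (h : ∑ i, p i * z i ≤ t) : t⁻¹ ≤ ∑ i, p i * (z i)⁻¹ := by
  have : t⁻¹ + t⁻¹ ≤ ∑ i, p i * (z i)⁻¹ + t⁻¹ := by
    calc t⁻¹ + t⁻¹ = ∑ i, p i * (2 * t⁻¹) := by rw [← Finset.sum_mul, hp, one_mul, two_mul]
      _ ≤ ∑ i, p i * ((z i)⁻¹ + z i * (t⁻¹ * t⁻¹)) := by
          gcongr with i; exact two_mul_inv_le_inv_add t (z i) h0 ht
      _ = ∑ i, p i * (z i)⁻¹ + (∑ i, p i * z i) * (t⁻¹ * t⁻¹) := by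
          simp only [mul_add, Finset.sum_add_distrib, Finset.sum_mul, mul_assoc]
      _ ≤ ∑ i, p i * (z i)⁻¹ + t * (t⁻¹ * t⁻¹) := by gcongr
      _ = _ := by rw [← mul_assoc, ENNReal.mul_inv_cancel h0 ht, one_mul]
  exact (ENNReal.add_le_add_iff_right (ENNReal.inv_ne_top.2 h0)).1 this

variable {A B : Type*} [Fintype A] [Fintype B]

lemma exists_isSimulation_of_encoder {K : Type*} [Fintype K] {M : ℕ} (hM : 0 < M) {c : ℝ}
    (hc : Real.logb 2 M ≤ c) {PK : K → ℝ≥0∞} (hPK : ∑ k, PK k = 1) {e : A → K → Fin M → ℝ≥0∞}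
    (he : ∀ x k, ∑ j, e x k j ≤ 1) {D : Fin M → K → B → ℝ≥0∞} (hD : ∀ j k, ∑ y, D j k y = 1) :
    ∃ N : A → B → ℝ≥0∞, IsSimulation c N ∧
      ∀ x y, ∑ k, ∑ j, PK k * e x k j * D j k y ≤ N x y := by
  let E (x : A) (k : K) (j : Fin M) := e x k j + if j = ⟨0, hM⟩ then 1 - ∑ j, e x k j else 0
  have hE (x : A) (k : K) : ∑ j, E x k j = 1 := by
    simp only [E, Finset.sum_add_distrib, Finset.sum_ite_eq', Finset.mem_univ, if_true]
    exact add_tsub_cancel_of_le (he x k)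
  let φ := (Fintype.equivFin K).symm
  refine ⟨fun x y => ∑ k, ∑ j, PK k * E x k j * D j k y, ⟨_, M, PK ∘ φ, fun x k => E x (φ k),
    fun j k => D j (φ k), hM, hc, ?_, fun x k => hE x _, fun j k => hD j _, fun x y => ?_⟩,
    fun x y => ?_⟩
  · exact (φ.sum_comp PK).trans hPK
  · exact (φ.sum_comp fun k => ∑ j, PK k * E x k j * D j k y).symm
  · refine Finset.sum_le_sum fun k _ => Finset.sum_le_sum fun j _ => ?_
    exact mul_le_mul_left (mul_le_mul_right le_self_add _) _

lemma le_sum_selection {M : ℕ} {Q w : B → ℝ≥0∞} (hQ : IsDist Q) (hw1 : ∑ y, Q y * w y ≤ 1)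
    (hwM : ∀ y, w y ≤ M) (y : B) (j : Fin M) :
    Q y * w y * (3 * M : ℝ≥0∞)⁻¹ ≤ ∑ k : Fin M → B, (∏ l, Q (k l)) *
      (w (k j) / (M + ∑ l, w (k l))) * if k j = y then 1 else 0 := by
  let v : Fin M → B → ℝ≥0∞ := Function.update (fun _ => Q) j fun y' => if y' = y then 1 else 0
  have hvj : v j = fun y' => if y' = y then 1 else 0 := Function.update_self ..
  have hvl {l : Fin M} (hl : l ≠ j) : v l = Q := Function.update_of_ne hl ..
  have hv (l : Fin M) : ∑ y', v l y' = 1 := by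
    by_cases hl : l = j
    · simp [hl, hvj]
    · rw [hvl hl]; exact hQ
  have hv1 : ∑ k : Fin M → B, ∏ l, v l (k l) = 1 := by simp [← Fintype.prod_sum, hv]
  have mean : ∑ k : Fin M → B, (∏ l, v l (k l)) * (M + ∑ l, w (k l)) ≤ 3 * M := by
    calc _ = (M : ℝ≥0∞) + ∑ l, ∑ y', v l y' * w y' := by
          simp only [mul_add, Finset.sum_add_distrib, ← Finset.sum_mul, hv1, one_mul]
          rw [sum_prod_mul_sum hv fun _ => w]
      _ ≤ M + ∑ l, ((if l = j then (M : ℝ≥0∞) else 0) + 1) := by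
          gcongr with l
          by_cases hl : l = j
          · simpa [hl, hvj] using le_add_of_le_left (hwM y)
          · simpa [hl, hvl hl] using hw1
      _ = 3 * M := by simp [Finset.sum_add_distrib]; ring
  have hterm (k : Fin M → B) : Q y * w y * ((∏ l, v l (k l)) * (M + ∑ l, w (k l))⁻¹) =
      (∏ l, Q (k l)) * (w (k j) / (M + ∑ l, w (k l))) * if k j = y then 1 else 0 := by
    by_cases hk : k j = y
    · simp only [← Finset.mul_prod_erase _ _ (Finset.mem_univ j), hvj, hk, if_true,
        Finset.prod_congr rfl fun l hl => congrFun (hvl (Finset.ne_of_mem_erase hl)) (k l),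
        div_eq_mul_inv]
      ring
    · rw [if_neg hk, Finset.prod_eq_zero (Finset.mem_univ j) (by simp [hvj, hk])]
      simp
  have hM0 : (3 * M : ℝ≥0∞) ≠ 0 := by simp [j.pos.ne']
  have hMt : (3 * M : ℝ≥0∞) ≠ ⊤ := ENNReal.mul_ne_top (by simp) (by simp)
  simp only [← hterm, ← Finset.mul_sum]
  gcongr
  exact inv_le_sum_mul_inv hv1 hM0 hMt mean

-- The shared randomness is `M` independent samples of `Q`; the encoder picks the `j`-th one with
-- probability proportional to its likelihood ratio `w = N' / Q`, normalised by `M + ∑ w`.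
lemma exists_isSimulation_le_three_mul {M : ℕ} (hM : 0 < M) {c : ℝ} (hc : Real.logb 2 M ≤ c)
    {Q : B → ℝ≥0∞} (hQ : IsDist Q) {N' : A → B → ℝ≥0∞} (h1 : ∀ x, ∑ y, N' x y ≤ 1)
    (hle : ∀ x y, N' x y ≤ M * Q y) :
    ∃ N : A → B → ℝ≥0∞, IsSimulation c N ∧ ∀ x y, N' x y ≤ 3 * N x y := by
  let w (x : A) (y : B) := N' x y / Q y
  have hQw (x : A) (y : B) : Q y * w x y = N' x y := by
    by_cases h0 : Q y = 0
    · have : N' x y = 0 := by simpa [h0] using hle x y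
      simp [h0, this]
    · exact ENNReal.mul_div_cancel h0 (hQ.ne_top y)
  have he (x : A) (k : Fin M → B) : ∑ j, w x (k j) / (M + ∑ l, w x (k l)) ≤ 1 := by
    simp only [div_eq_mul_inv, ← Finset.sum_mul]
    rw [← div_eq_mul_inv]
    exact ENNReal.div_le_of_le_mul (by rw [one_mul]; exact le_add_self)
  obtain ⟨N, hN, hN'⟩ := exists_isSimulation_of_encoder hM hc
    (PK := fun k : Fin M → B => ∏ l, Q (k l)) (IsDist.pi fun _ => hQ)
    he (D := fun j k y => if k j = y then 1 else 0) (fun j k => by simp)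
  refine ⟨N, hN, fun x y => ?_⟩
  have hsel := Finset.sum_le_sum fun j (_ : j ∈ Finset.univ) => le_sum_selection (w := w x) hQ
    (by simpa only [hQw] using h1 x) (fun y => ENNReal.div_le_of_le_mul (hle x y)) y j
  rw [Finset.sum_comm] at hsel
  have hM0 : (M : ℝ≥0∞) ≠ 0 := by exact_mod_cast hM.ne'
  calc N' x y = 3 * (M * (N' x y * (3 * M : ℝ≥0∞)⁻¹)) := by
        rw [mul_left_comm (M : ℝ≥0∞), mul_left_comm 3, ← mul_assoc (3 : ℝ≥0∞),
          ENNReal.mul_inv_cancel (by simp [hM0]) (ENNReal.mul_ne_top (by simp) (by simp)), mul_one]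
    _ ≤ 3 * N x y := by
        gcongr
        refine le_trans ?_ (hsel.trans (hN' x y))
        simp [hQw]

lemma simD_le {α : ℝ≥0∞} {V N' : A → B → ℝ≥0∞} (hV : IsChannel V) {c : ℝ} (hc : 0 ≤ c)
    {Q : B → ℝ≥0∞} (hQ : IsDist Q) (h1 : ∀ x, ∑ y, N' x y ≤ 1)
    (hle : ∀ x y, N' x y ≤ 2 ^ (c - 1) * Q y) {t : ℝ} (h : ∀ x, renyiD α (V x) (N' x) ≤ t) :
    simD α V c ≤ ((t + 2 : ℝ) : EReal) := by
  have hx : (1 : ℝ) ≤ 2 ^ c := Real.one_le_rpow one_le_two hc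
  set M := ⌊(2 : ℝ) ^ c⌋₊
  have hM : 0 < M := Nat.floor_pos.2 hx
  have hM1 : (1 : ℝ) ≤ M := Nat.one_le_cast.2 hM
  have hlog : Real.logb 2 M ≤ c := by
    rw [Real.logb_le_iff_le_rpow one_lt_two (by positivity)]
    exact Nat.floor_le (by positivity)
  have hMle : (2 : ℝ≥0∞) ^ (c - 1) ≤ M := by
    rw [two_rpow_eq_ofReal, ← ENNReal.ofReal_natCast, Real.rpow_sub two_pos, Real.rpow_one]
    refine ENNReal.ofReal_le_ofReal ?_
    linarith [Nat.lt_floor_add_one ((2 : ℝ) ^ c)]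
  obtain ⟨N, hN, hN'⟩ := exists_isSimulation_le_three_mul hM hlog hQ h1
    fun x y => (hle x y).trans (by gcongr)
  refine (iInf_le _ ⟨N, hN⟩).trans (iSup_le fun x => ?_)
  refine renyiD_le_add_of_le_mul (hV.isDist x) (hN.isChannel.isDist x).ne_top
    (fun y => (hN' x y).trans ?_) (h x)
  gcongr
  norm_num

lemma Esc_le_of_forall_simD_le {α : ℝ≥0∞} {W : A → B → ℝ≥0∞} {r T : ℝ} (hr : 0 ≤ r)
    (h : ∀ ε > 0, ∃ e : ℕ → ℝ, Tendsto (fun n : ℕ => e n / n) atTop (nhds 0) ∧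
      ∀ n : ℕ, simD α (prodCh n W) (n * r) ≤ ((n * (T + ε) + e n : ℝ) : EReal)) :
    Esc α W r ≤ (T : EReal) := by
  have hc : RateOK r (fun n => n * r) := by
    refine ⟨fun n => by positivity, limsup_le_of_le (h := ?_)⟩
    filter_upwards [eventually_gt_atTop 0] with n hn
    rw [mul_div_cancel_left₀ _ (by exact_mod_cast hn.ne')]
  refine (iInf_le _ ⟨_, hc⟩).trans (EReal.le_of_forall_lt_iff_le.1 fun z hz => ?_)
  have hz' : 0 < (z - T) / 2 := by linarith [EReal.coe_lt_coe_iff.1 hz]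
  obtain ⟨e, he, h⟩ := h _ hz'
  refine limsup_le_of_le (h := ?_)
  filter_upwards [he.eventually_lt_const hz', eventually_gt_atTop 0] with n h1 hn
  have hn' : (0 : ℝ) < n := by exact_mod_cast hn
  rw [one_div, inv_mul_le_coe_iff_of_pos hn']
  refine (h n).trans (EReal.coe_le_coe_iff.2 ?_)
  rw [div_lt_iff₀ hn'] at h1
  linarith

end RejectionSampling

section Minimax

lemma convexOn_sum_mul {ι E : Type*} [Fintype ι] [AddCommGroup E] [Module ℝ E] {K : Set E}
    (hK : Convex ℝ K) {f : ι → E → ℝ} (hf : ∀ i, ConvexOn ℝ K (f i)) {p : ι → ℝ}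
    (hp : ∀ i, 0 ≤ p i) : ConvexOn ℝ K fun v => ∑ i, p i * f i v := by
  refine ⟨hK, fun u hu v hv a b ha hb hab => ?_⟩
  simp only [Finset.smul_sum, ← Finset.sum_add_distrib]
  exact Finset.sum_le_sum fun i _ => ((hf i).smul (hp i)).2 hu hv ha hb hab

lemma exists_forall_le_of_forall_stdSimplex {ι E : Type*} [Fintype ι] [Nonempty ι]
    [TopologicalSpace E] [AddCommGroup E] [Module ℝ E] [IsTopologicalAddGroup E]
    [ContinuousSMul ℝ E] {K : Set E} (hK : IsCompact K) {f : ι → E → ℝ}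
    (hf : ∀ i, ConvexOn ℝ K (f i)) (hcont : ∀ i, ContinuousOn (f i) K) {c : ℝ}
    (h : ∀ p ∈ stdSimplex ℝ ι, ∃ v ∈ K, ∑ i, p i * f i v ≤ c) : ∃ v ∈ K, ∀ i, f i v ≤ c := by
  have hne : (stdSimplex ℝ ι).Nonempty := ⟨_, single_mem_stdSimplex ℝ (Classical.arbitrary ι)⟩
  have hKc : Convex ℝ K := (hf (Classical.arbitrary ι)).1
  have hKne : K.Nonempty := (h _ hne.some_mem).imp fun _ => And.left
  have hlin (v : E) : Continuous fun p : ι → ℝ => ∑ i, p i * f i v := by fun_prop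
  have haff (v : E) : ConcaveOn ℝ (stdSimplex ℝ ι) fun p => ∑ i, p i * f i v :=
    (∑ i, f i v • LinearMap.proj (R := ℝ) i : (ι → ℝ) →ₗ[ℝ] ℝ).concaveOn
      (convex_stdSimplex ℝ ι) |>.congr fun p _ => by simp [mul_comm]
  obtain ⟨v, hv, p, hp, hs⟩ := Sion.exists_isSaddlePointOn (f := fun v p => ∑ i, p i * f i v) hKne
    hKc hK (fun p _ => (continuousOn_finsetSum _ fun i _ =>
      continuousOn_const.mul (hcont i)).lowerSemicontinuousOn)
    (fun p hp => (convexOn_sum_mul hKc hf hp.1).quasiconvexOn) (convex_stdSimplex ℝ ι) hne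
    (isCompact_stdSimplex ℝ ι) (fun v _ => (hlin v).continuousOn.upperSemicontinuousOn)
    fun v _ => (haff v).quasiconcaveOn
  obtain ⟨v', hv', hle⟩ := h p hp
  refine ⟨v, hv, fun i => ?_⟩
  calc f i v = ∑ j, (Pi.single i 1 : ι → ℝ) j * f j v := by simp [Pi.single_apply]
    _ ≤ ∑ j, p j * f j v' := hs v' hv' _ (single_mem_stdSimplex ℝ i)
    _ ≤ c := hle

lemma exists_add_max_le_of_forall_add_mul_le {E : Type*} [TopologicalSpace E] [AddCommGroup E]
    [Module ℝ E] [IsTopologicalAddGroup E] [ContinuousSMul ℝ E] {K : Set E} (hK : IsCompact K)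
    {f g : E → ℝ} (hf : ConvexOn ℝ K f) (hg : ConvexOn ℝ K g) (hfc : ContinuousOn f K)
    (hgc : ContinuousOn g K) {c : ℝ} (h : ∀ t, 0 ≤ t → t ≤ 1 → ∃ v ∈ K, f v + t * g v ≤ c) :
    ∃ v ∈ K, f v + max (g v) 0 ≤ c := by
  obtain ⟨v, hv, hle⟩ := exists_forall_le_of_forall_stdSimplex hK
    (f := fun b v => f v + bif b then g v else 0)
    (Bool.forall_bool.2 ⟨by simpa using hf, hf.add hg⟩)
    (Bool.forall_bool.2 ⟨by simpa using hfc, hfc.add hgc⟩) (c := c) fun p hp => by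
      have hp1 := hp.2
      rw [Fintype.sum_bool] at hp1
      obtain ⟨v, hv, hle⟩ := h (p true) (hp.1 true) (by linarith [hp.1 false])
      refine ⟨v, hv, ?_⟩
      simp only [Fintype.sum_bool, cond_true, cond_false]
      linear_combination hle + f v * hp1
  exact ⟨v, hv, (max_add_add_left _ _ _).symm.trans_le (max_le (hle true) (hle false))⟩

end Minimax

section Capacity

variable {A B : Type*} [Fintype A] [Fintype B]

lemma convexOn_kl : ConvexOn ℝ {vq : (B → ℝ) × (B → ℝ) | ∀ y, 0 ≤ vq.1 y ∧ 0 < vq.2 y}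
    fun vq => kl vq.1 vq.2 := by
  have hconv : Convex ℝ {vq : (B → ℝ) × (B → ℝ) | ∀ y, 0 ≤ vq.1 y ∧ 0 < vq.2 y} :=
    fun u hu v hv a b ha hb hab y => ⟨convex_Ici (0 : ℝ) (hu y).1 (hv y).1 ha hb hab,
      convex_Ioi (0 : ℝ) (hu y).2 (hv y).2 ha hb hab⟩
  refine ⟨hconv, fun u hu v hv a b ha hb _ => ?_⟩
  have key := fun y => log_sum_le (A := Fin 2) (v := ![a * u.1 y, b * v.1 y])
    (q := ![a * u.2 y, b * v.2 y])
    (by simp [Fin.forall_fin_two, mul_nonneg, ha, hb, (hu y).1, (hv y).1])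
    (by simp [Fin.forall_fin_two, mul_nonneg, ha, hb, (hu y).2.le, (hv y).2.le])
    (by simp +contextual [Fin.forall_fin_two, (hu y).2.ne', (hv y).2.ne'])
  have hcanc (c s t : ℝ) :
      c * s * Real.logb 2 (c * s / (c * t)) = c * (s * Real.logb 2 (s / t)) := by
    rcases eq_or_ne c 0 with rfl | hc
    · simp
    · rw [mul_div_mul_left _ _ hc, mul_assoc]
  simp only [kl, Fin.sum_univ_two, Matrix.cons_val_zero, Matrix.cons_val_one, hcanc] at key
  simp only [kl, smul_eq_mul, Finset.mul_sum, ← Finset.sum_add_distrib]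
  exact Finset.sum_le_sum fun y _ => key y

lemma continuousOn_kl :
    ContinuousOn (fun vq : (B → ℝ) × (B → ℝ) => kl vq.1 vq.2) {vq | ∀ y, vq.2 y ≠ 0} := by
  refine continuousOn_finsetSum _ fun y _ => ?_
  have hdiv : ContinuousOn (fun vq : (B → ℝ) × (B → ℝ) => vq.1 y / vq.2 y)
      {vq | ∀ y, vq.2 y ≠ 0} :=
    ContinuousOn.div (by fun_prop) (by fun_prop) fun vq h => h y
  have hmul := ContinuousOn.mul (f := fun vq : (B → ℝ) × (B → ℝ) => vq.2 y) (by fun_prop)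
    (Real.continuous_mul_log.comp_continuousOn hdiv)
  refine (hmul.div_const (Real.log 2)).congr fun vq h => ?_
  have := h y
  simp only [Real.logb, Pi.mul_apply, Function.comp_apply]
  field_simp

lemma convexOn_rpow_of_neg {p : ℝ} (hp : p < 0) : ConvexOn ℝ (Set.Ioi 0) fun x : ℝ => x ^ p := by
  refine ⟨convex_Ioi 0, fun x hx y hy a b ha hb hab => ?_⟩
  have hlog := strictConcaveOn_log_Ioi.concaveOn.2 hx hy ha hb hab
  have hxy : 0 < a • x + b • y := convex_Ioi (0 : ℝ) hx hy ha hb hab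
  simp only [smul_eq_mul] at hlog hxy ⊢
  calc (a * x + b * y) ^ p = Real.exp (p * Real.log (a * x + b * y)) := by
        rw [Real.rpow_def_of_pos hxy, mul_comm]
    _ ≤ Real.exp (a * (p * Real.log x) + b * (p * Real.log y)) :=
        Real.exp_le_exp.2 (by linarith [mul_le_mul_of_nonpos_left hlog hp.le])
    _ ≤ a * Real.exp (p * Real.log x) + b * Real.exp (p * Real.log y) :=
        convexOn_exp.2 (Set.mem_univ _) (Set.mem_univ _) ha hb hab
    _ = a * x ^ p + b * y ^ p := by
        rw [Real.rpow_def_of_pos hx, Real.rpow_def_of_pos hy, mul_comm p, mul_comm p]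

/-- The probability vectors on `B` all of whose entries are at least `δ`. -/
def innerSimplex (B : Type*) [Fintype B] (δ : ℝ) : Set (B → ℝ) :=
  stdSimplex ℝ B ∩ Set.Ici fun _ => δ

lemma convex_innerSimplex (δ : ℝ) : Convex ℝ (innerSimplex B δ) :=
  (convex_stdSimplex ℝ B).inter (convex_Ici _)

lemma isCompact_innerSimplex (δ : ℝ) : IsCompact (innerSimplex B δ) :=
  (isCompact_stdSimplex ℝ B).inter_right isClosed_Ici

lemma isDist_ofReal {q : B → ℝ} (hq : q ∈ stdSimplex ℝ B) :
    IsDist fun y => ENNReal.ofReal (q y) := by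
  rw [IsDist, ← ENNReal.ofReal_sum_of_nonneg fun y _ => hq.1 y, hq.2, ENNReal.ofReal_one]

lemma exists_mem_innerSimplex [Nonempty B] {ε : ℝ} (hε : 0 < ε) : ∃ δ > 0, ∀ Q : B → ℝ≥0∞,
    IsDist Q → ∃ q ∈ innerSimplex B δ, ∀ y, Q y ≤ 2 ^ ε * ENNReal.ofReal (q y) := by
  have hδ : 0 < (1 - (2 : ℝ) ^ (-ε)) / Fintype.card B := div_pos
    (sub_pos.2 (Real.rpow_lt_one_of_one_lt_of_neg one_lt_two (neg_neg_of_pos hε))) (by positivity)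
  have hQ0 (Q : B → ℝ≥0∞) (y : B) : 0 ≤ 2 ^ (-ε) * (Q y).toReal := by positivity
  refine ⟨_, hδ, fun Q hQ => ⟨fun y => 2 ^ (-ε) * (Q y).toReal + _,
    ⟨⟨fun y => add_nonneg (hQ0 Q y) hδ.le, ?_⟩, fun y => le_add_of_nonneg_left (hQ0 Q y)⟩,
    fun y => ?_⟩⟩
  · simp only [Finset.sum_add_distrib, ← Finset.mul_sum, hQ.sum_toReal, Finset.sum_const,
      Finset.card_univ, nsmul_eq_mul]
    field_simp
    ring
  · rw [two_rpow_eq_ofReal, ← ENNReal.ofReal_mul (by positivity)]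
    refine (ENNReal.le_ofReal_iff_toReal_le (hQ.ne_top y)
      (mul_nonneg (by positivity) (add_nonneg (hQ0 Q y) hδ.le))).2 ?_
    rw [mul_add, ← mul_assoc, ← Real.rpow_add two_pos, add_neg_cancel, Real.rpow_zero, one_mul]
    exact le_add_of_nonneg_right (mul_nonneg (by positivity) hδ.le)

lemma exists_mem_innerSimplex_renyiD_joint_le [Nonempty B] {ε : ℝ} (hε : 0 < ε) :
    ∃ δ > 0, ∀ (α : ℝ≥0∞) (W : A → B → ℝ≥0∞), IsChannel W → ∀ d : ℝ, renyiCap α W < d →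
      ∀ P : A → ℝ≥0∞, IsDist P → ∃ q ∈ innerSimplex B δ,
        renyiD α (joint P W) (fun z => P z.1 * ENNReal.ofReal (q z.2)) ≤ ((d + ε : ℝ) : EReal) := by
  obtain ⟨δ, hδ, h⟩ := exists_mem_innerSimplex (B := B) hε
  refine ⟨δ, hδ, fun α W hW d hd P hP => ?_⟩
  obtain ⟨Q, hQ, hQd⟩ := exists_renyiD_joint_le_of_renyiCap_lt hP hW hd
  obtain ⟨q, hq, hle⟩ := h Q hQ
  have hfin (z : A × B) : P z.1 * ENNReal.ofReal (q z.2) ≠ ⊤ :=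
    ENNReal.mul_ne_top (hP.ne_top z.1) ENNReal.ofReal_ne_top
  have hmul (z : A × B) : P z.1 * Q z.2 ≤ 2 ^ ε * (P z.1 * ENNReal.ofReal (q z.2)) :=
    (mul_le_mul_right (hle z.2) (P z.1)).trans_eq (mul_left_comm _ _ _)
  exact ⟨q, hq, renyiD_le_add_of_le_mul (hP.joint hW) (Q := fun z => _ * _)
    (Q' := fun z => _ * _) hfin hmul hQd⟩

section Minimax

variable {W : A → B → ℝ≥0∞} {δ d : ℝ}

lemma exists_forall_renyiD_le_of_convexOn [Nonempty A] {α : ℝ≥0∞} {K : Set (B → ℝ)}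
    (hK : IsCompact K) {f : A → (B → ℝ) → ℝ} (hf : ∀ x, ConvexOn ℝ K (f x))
    (hcont : ∀ x, ContinuousOn (f x) K) {c : ℝ}
    (hrow : ∀ q ∈ K, ∀ x, f x q ≤ c → renyiD α (W x) (fun y => ENNReal.ofReal (q y)) ≤ d)
    (havg : ∀ p ∈ stdSimplex ℝ A, ∀ q ∈ K, renyiD α (joint (fun x => ENNReal.ofReal (p x)) W)
      (fun z => ENNReal.ofReal (p z.1) * ENNReal.ofReal (q z.2)) ≤ d → ∑ x, p x * f x q ≤ c)
    (h : ∀ P : A → ℝ≥0∞, IsDist P → ∃ q ∈ K,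
      renyiD α (joint P W) (fun z => P z.1 * ENNReal.ofReal (q z.2)) ≤ d) :
    ∃ q ∈ K, ∀ x, renyiD α (W x) (fun y => ENNReal.ofReal (q y)) ≤ d := by
  obtain ⟨q, hq, hle⟩ := exists_forall_le_of_forall_stdSimplex hK hf hcont fun p hp => by
    obtain ⟨q, hq, hle⟩ := h _ (isDist_ofReal hp)
    exact ⟨q, hq, havg p hp q hq hle⟩
  exact ⟨q, hq, fun x => hrow q hq x (hle x)⟩

lemma exists_forall_renyiD_one_le [Nonempty A] (hW : IsChannel W) (hδ : 0 < δ)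
    (h : ∀ P : A → ℝ≥0∞, IsDist P → ∃ q ∈ innerSimplex B δ,
      renyiD 1 (joint P W) (fun z => P z.1 * ENNReal.ofReal (q z.2)) ≤ d) :
    ∃ q ∈ innerSimplex B δ, ∀ x, renyiD 1 (W x) (fun y => ENNReal.ofReal (q y)) ≤ d := by
  have hpos (q) (hq : q ∈ innerSimplex B δ) (y : B) : 0 < q y := hδ.trans_le (hq.2 y)
  refine exists_forall_renyiD_le_of_convexOn (c := d)
    (f := fun x q => kl (fun y => (W x y).toReal) q) (isCompact_innerSimplex δ)
    (fun x => ⟨convex_innerSimplex δ, fun q hq q' hq' a b ha hb hab => ?_⟩)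
    (fun x => continuousOn_kl.comp (f := fun q => (_, q)) (by fun_prop)
      fun q hq y => (hpos q hq y).ne') (fun q hq x hx => ?_) (fun p hp q hq hle => ?_) h
  · have := convexOn_kl.2 (x := (fun y => (W x y).toReal, q)) (y := (fun y => (W x y).toReal, q'))
      (fun y => ⟨ENNReal.toReal_nonneg, hpos q hq y⟩)
      (fun y => ⟨ENNReal.toReal_nonneg, hpos q' hq' y⟩) ha hb hab
    simpa only [Prod.fst_add, Prod.smul_fst, Prod.snd_add, Prod.smul_snd, ← add_smul, hab, one_smul]
      using this
  · rw [renyiD_one_le_iff (hW.ne_top x) fun _ => ENNReal.ofReal_ne_top]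
    refine ⟨fun y _ => (ENNReal.ofReal_pos.2 (hpos q hq y)).ne', ?_⟩
    simpa only [ENNReal.toReal_ofReal (hpos q hq _).le] using hx
  · have := ((renyiD_one_joint_le_iff (isDist_ofReal hp) hW (isDist_ofReal hq.1)).1 hle).2
    simpa only [ENNReal.toReal_ofReal (hp.1 _), ENNReal.toReal_ofReal (hpos q hq _).le] using this

lemma renyiSum_ofReal {P : B → ℝ≥0∞} (hP : ∀ y, P y ≠ ⊤) {q : B → ℝ} (hq : ∀ y, 0 < q y) (a : ℝ) :
    renyiSum a P (fun y => ENNReal.ofReal (q y)) =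
      ENNReal.ofReal (∑ y, (suppRpow (P y) a).toReal * q y ^ (1 - a)) := by
  rw [ENNReal.ofReal_sum_of_nonneg fun y _ => by have := hq y; positivity]
  refine Finset.sum_congr rfl fun y _ => ?_
  have hfin : suppRpow (P y) a ≠ ⊤ := by
    unfold suppRpow
    split_ifs with h0
    · exact ENNReal.zero_ne_top
    · simp [ENNReal.rpow_eq_top_iff, h0, hP y]
  rw [ENNReal.ofReal_mul ENNReal.toReal_nonneg, ENNReal.ofReal_toReal hfin,
    ENNReal.ofReal_rpow_of_pos (hq y)]

lemma renyiSum_joint_ofReal (hW : IsChannel W) {p : A → ℝ} (hp : p ∈ stdSimplex ℝ A) {q : B → ℝ}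
    (hq : ∀ y, 0 < q y) (a : ℝ) :
    renyiSum a (joint (fun x => ENNReal.ofReal (p x)) W)
        (fun z => ENNReal.ofReal (p z.1) * ENNReal.ofReal (q z.2)) =
      ENNReal.ofReal (∑ x, p x * ∑ y, (suppRpow (W x y) a).toReal * q y ^ (1 - a)) := by
  have hnn (x : A) : 0 ≤ ∑ y, (suppRpow (W x y) a).toReal * q y ^ (1 - a) :=
    Finset.sum_nonneg fun y _ => by have := hq y; positivity
  rw [renyiSum_joint a (isDist_ofReal hp) hW.ne_top (Q := fun y => ENNReal.ofReal (q y))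
    fun _ => ENNReal.ofReal_ne_top, ENNReal.ofReal_sum_of_nonneg fun x _ =>
    mul_nonneg (hp.1 x) (hnn x)]
  simp only [renyiSum_ofReal (hW.ne_top _) hq, ENNReal.ofReal_mul (hp.1 _)]

lemma continuousOn_sum_mul_rpow (hδ : 0 < δ) (k : B → ℝ) (s : ℝ) :
    ContinuousOn (fun q : B → ℝ => ∑ y, k y * q y ^ s) (innerSimplex B δ) :=
  continuousOn_finsetSum _ fun y _ => continuousOn_const.mul <|
    ContinuousOn.rpow_const (by fun_prop) fun _ hq => Or.inl (hδ.trans_le (hq.2 y)).ne'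

lemma convexOn_sum_mul_apply {s : Set ℝ} {g : ℝ → ℝ} (hg : ConvexOn ℝ s g) {k : B → ℝ}
    (hk : ∀ y, 0 ≤ k y) (hs : Set.Ici δ ⊆ s) :
    ConvexOn ℝ (innerSimplex B δ) fun q : B → ℝ => ∑ y, k y * g (q y) :=
  convexOn_sum_mul (f := fun y q => g (q y)) (convex_innerSimplex δ) (fun y =>
    (hg.comp_linearMap (LinearMap.proj (R := ℝ) y)).subset (fun _ hq => hs (hq.2 y))
      (convex_innerSimplex δ)) hk

lemma exists_forall_renyiD_le_of_lt_one [Nonempty A] (hW : IsChannel W) (hδ : 0 < δ) {a : ℝ}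
    (h0 : 0 ≤ a) (h1 : a < 1) (h : ∀ P : A → ℝ≥0∞, IsDist P → ∃ q ∈ innerSimplex B δ,
      renyiD (ENNReal.ofReal a) (joint P W) (fun z => P z.1 * ENNReal.ofReal (q z.2)) ≤ d) :
    ∃ q ∈ innerSimplex B δ,
      ∀ x, renyiD (ENNReal.ofReal a) (W x) (fun y => ENNReal.ofReal (q y)) ≤ d := by
  have hpos (q) (hq : q ∈ innerSimplex B δ) (y : B) : 0 < q y := hδ.trans_le (hq.2 y)
  have hconc := Real.concaveOn_rpow (sub_nonneg.2 h1.le) (sub_le_self 1 h0)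
  refine exists_forall_renyiD_le_of_convexOn (c := -2 ^ ((a - 1) * d))
    (f := fun x q => ∑ y, (suppRpow (W x y) a).toReal * -q y ^ (1 - a)) (isCompact_innerSimplex δ)
    (fun x => convexOn_sum_mul_apply hconc.neg (fun y => ENNReal.toReal_nonneg)
      (Set.Ici_subset_Ici.2 hδ.le)) (fun x => ?_) (fun q hq x hx => ?_) (fun p hp q hq hle => ?_) h
  · simp only [mul_neg, Finset.sum_neg_distrib]
    exact (continuousOn_sum_mul_rpow hδ _ _).neg
  · simp only [mul_neg, Finset.sum_neg_distrib, neg_le_neg_iff] at hx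
    rw [renyiD_le_iff_of_lt_one h0 h1, renyiSum_ofReal (hW.ne_top x) (hpos q hq),
      two_rpow_eq_ofReal]
    exact ENNReal.ofReal_le_ofReal hx
  · rw [renyiD_le_iff_of_lt_one h0 h1, renyiSum_joint_ofReal hW hp (hpos q hq),
      two_rpow_eq_ofReal] at hle
    simpa only [mul_neg, Finset.sum_neg_distrib, neg_le_neg_iff] using
      (ENNReal.ofReal_le_ofReal_iff'.1 hle).resolve_right (not_le.2 (by positivity))

lemma exists_forall_renyiD_le_of_one_lt [Nonempty A] (hW : IsChannel W) (hδ : 0 < δ) {a : ℝ}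
    (h1 : 1 < a) (h : ∀ P : A → ℝ≥0∞, IsDist P → ∃ q ∈ innerSimplex B δ,
      renyiD (ENNReal.ofReal a) (joint P W) (fun z => P z.1 * ENNReal.ofReal (q z.2)) ≤ d) :
    ∃ q ∈ innerSimplex B δ,
      ∀ x, renyiD (ENNReal.ofReal a) (W x) (fun y => ENNReal.ofReal (q y)) ≤ d := by
  have hpos (q) (hq : q ∈ innerSimplex B δ) (y : B) : 0 < q y := hδ.trans_le (hq.2 y)
  refine exists_forall_renyiD_le_of_convexOn (c := 2 ^ ((a - 1) * d))
    (f := fun x q => ∑ y, (suppRpow (W x y) a).toReal * q y ^ (1 - a)) (isCompact_innerSimplex δ)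
    (fun x => convexOn_sum_mul_apply (convexOn_rpow_of_neg (sub_neg.2 h1))
      (fun y => ENNReal.toReal_nonneg) (Set.Ici_subset_Ioi.2 hδ))
    (fun x => continuousOn_sum_mul_rpow hδ _ _) (fun q hq x hx => ?_) (fun p hp q hq hle => ?_) h
  · rw [renyiD_le_iff_of_one_lt h1, renyiSum_ofReal (hW.ne_top x) (hpos q hq), two_rpow_eq_ofReal]
    exact ENNReal.ofReal_le_ofReal hx
  · rw [renyiD_le_iff_of_one_lt h1, renyiSum_joint_ofReal hW hp (hpos q hq), two_rpow_eq_ofReal]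
      at hle
    exact (ENNReal.ofReal_le_ofReal_iff (by positivity)).1 hle

end Minimax

lemma exists_forall_renyiD_le_of_renyiCap_lt [Nonempty A] [Nonempty B] {ε : ℝ} (hε : 0 < ε) :
    ∃ δ > 0, ∀ {α : ℝ≥0∞}, α ≠ ⊤ → ∀ {W : A → B → ℝ≥0∞}, IsChannel W → ∀ {d : ℝ},
      renyiCap α W < d → ∃ q ∈ innerSimplex B δ,
        ∀ x, renyiD α (W x) (fun y => ENNReal.ofReal (q y)) ≤ ((d + ε : ℝ) : EReal) := by
  obtain ⟨δ, hδ, h⟩ := exists_mem_innerSimplex_renyiD_joint_le (A := A) (B := B) hε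
  refine ⟨δ, hδ, fun {α} hα W hW d hd => ?_⟩
  obtain rfl | rfl | ⟨a, h0, h1, rfl⟩ := order_cases α
  · exact exists_forall_renyiD_one_le hW hδ (h _ W hW d hd)
  · exact absurd rfl hα
  · obtain h1 | h1 := h1.lt_or_gt
    · exact exists_forall_renyiD_le_of_lt_one hW hδ h0 h1 (h _ W hW d hd)
    · exact exists_forall_renyiD_le_of_one_lt hW hδ h1 (h _ W hW d hd)

lemma exists_forall_renyiD_top_le [Nonempty A] {W : A → B → ℝ≥0∞} (hW : IsChannel W) {d : ℝ}
    (hd : renyiCap ⊤ W ≤ d) : ∃ Q : B → ℝ≥0∞, IsDist Q ∧ ∀ x, renyiD ⊤ (W x) Q ≤ d := by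
  set U : A → ℝ≥0∞ := fun _ => (Fintype.card A : ℝ≥0∞)⁻¹
  have hU : IsDist U := by
    simp [IsDist, U, ENNReal.mul_inv_cancel]
  have hle (x : A) (y : B) : W x y ≤ supportMax U W y :=
    le_iSup₂_of_le x (by simp [U]) le_rfl
  have h0 := sum_supportMax_ne_zero hU hW
  have ht := sum_supportMax_ne_top U hW
  have hsum : ∑ y, supportMax U W y ≤ 2 ^ d := by
    refine elog2_le_coe_iff.1 (EReal.le_of_forall_lt_iff_le.1 fun z hz => ?_)
    obtain ⟨Q, hQ, hle⟩ := exists_renyiD_joint_le_of_renyiCap_lt hU hW (hd.trans_lt hz)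
    rw [elog2_le_coe_iff]
    calc ∑ y, supportMax U W y ≤ ∑ y, 2 ^ z * Q y :=
          Finset.sum_le_sum fun y _ => (renyiD_top_joint_le_iff hU.ne_top Q).1 hle y
      _ = 2 ^ z := by rw [← Finset.mul_sum, show ∑ y, Q y = 1 from hQ, mul_one]
  refine ⟨_, isDist_div_sum h0 ht, fun x => renyiD_top_le_iff.2 fun y => (hle x y).trans ?_⟩
  calc supportMax U W y = (∑ y, supportMax U W y) * (supportMax U W y / ∑ y, supportMax U W y) :=
        (ENNReal.mul_div_cancel h0 ht).symm
    _ ≤ 2 ^ d * (supportMax U W y / ∑ y, supportMax U W y) := mul_le_mul_left hsum _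

end Capacity

section OrderAboveOne

variable {A B : Type*} [Fintype A] [Fintype B]

lemma exists_isDist_forall_renyiD_le [Nonempty A] [Nonempty B] {α : ℝ≥0∞} {W : A → B → ℝ≥0∞}
    (hW : IsChannel W) {d : ℝ} (hd : renyiCap α W < d) :
    ∃ Q : B → ℝ≥0∞, IsDist Q ∧ ∀ x, renyiD α (W x) Q ≤ d := by
  obtain rfl | hα := eq_or_ne α ⊤
  · exact exists_forall_renyiD_top_le hW hd.le
  · obtain ⟨d', h1, h2⟩ := EReal.lt_iff_exists_real_btwn.1 hd
    obtain ⟨δ, -, h⟩ := exists_forall_renyiD_le_of_renyiCap_lt (A := A) (B := B)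
      (sub_pos.2 (EReal.coe_lt_coe_iff.1 h2))
    obtain ⟨q, hq, hle⟩ := h hα hW h1
    exact ⟨_, isDist_ofReal hq.1, by simpa only [add_sub_cancel] using hle⟩

lemma eq_top_or_eq_ofReal_of_one_lt {α : ℝ≥0∞} (hα : 1 < α) :
    α = ⊤ ∨ ∃ a : ℝ, 1 < a ∧ α = ENNReal.ofReal a := by
  obtain rfl | h := eq_or_ne α ⊤
  · exact Or.inl rfl
  · refine Or.inr ⟨α.toReal, ?_, (ENNReal.ofReal_toReal h).symm⟩
    simpa using (ENNReal.toReal_lt_toReal ENNReal.one_ne_top h).2 hα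

lemma renyiD_prodCh_le {α : ℝ≥0∞} (hα : 1 < α) {W : A → B → ℝ≥0∞} (hW : IsChannel W)
    {Q : B → ℝ≥0∞} (hQ : IsDist Q) {d : ℝ} (h : ∀ x, renyiD α (W x) Q ≤ d) {n : ℕ}
    (xs : Fin n → A) : renyiD α (prodCh n W xs) (prodDist n Q) ≤ ((n * d : ℝ) : EReal) := by
  obtain rfl | ⟨a, ha, rfl⟩ := eq_top_or_eq_ofReal_of_one_lt hα
  · simp only [renyiD_top_le_iff] at h ⊢
    intro ys
    calc prodCh n W xs ys ≤ ∏ i, (2 ^ d * Q (ys i)) :=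
          Finset.prod_le_prod' fun i _ => h (xs i) (ys i)
      _ = 2 ^ (n * d) * prodDist n Q ys := by
          rw [Finset.prod_mul_distrib, two_rpow_nat_mul, prodDist]
          simp
  · simp only [renyiD_le_iff_of_one_lt ha] at h ⊢
    calc renyiSum a (prodCh n W xs) (prodDist n Q) = ∏ i, renyiSum a (W (xs i)) Q :=
          renyiSum_prod (Q := fun _ => Q) a (fun i => hW.ne_top (xs i)) fun _ => hQ.ne_top
      _ ≤ ∏ _i : Fin n, 2 ^ ((a - 1) * d) := Finset.prod_le_prod' fun i _ => h (xs i)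
      _ = 2 ^ ((a - 1) * (n * d)) := by
          rw [mul_left_comm, two_rpow_nat_mul]
          simp

lemma renyiSum_min_le {P : B → ℝ≥0∞} (hP : ∀ y, P y ≠ ⊤) (a : ℝ) (Q : B → ℝ≥0∞) :
    renyiSum a P (fun y => min (P y) (Q y)) ≤ ∑ y, P y + renyiSum a P Q := by
  simp only [renyiSum, ← Finset.sum_add_distrib]
  refine Finset.sum_le_sum fun y _ => ?_
  obtain h | h := min_choice (P y) (Q y)
  · rw [h, suppRpow]
    refine le_add_right ?_
    split_ifs with h0
    · simp
    · rw [← ENNReal.rpow_add _ _ h0 (hP y), add_sub_cancel, ENNReal.rpow_one]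
  · rw [h]
    exact le_add_self

lemma simD_ofReal_le_of_renyiD_le {a : ℝ} (ha : 1 < a) {V : A → B → ℝ≥0∞} (hV : IsChannel V)
    {Q : B → ℝ≥0∞} (hQ : IsDist Q) {c t : ℝ} (hc : 0 ≤ c) (ht : 0 ≤ t)
    (h : ∀ x, renyiD (ENNReal.ofReal a) (V x) Q ≤ ((c + t : ℝ) : EReal)) :
    simD (ENNReal.ofReal a) V c ≤ ((t + 1 + (a - 1)⁻¹ + 2 : ℝ) : EReal) := by
  refine simD_le hV hc hQ (N' := fun x y => min (V x y) (2 ^ (c - 1) * Q y))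
    (fun x => (Finset.sum_le_sum fun y _ => min_le_left _ _).trans_eq (hV x))
    (fun x y => min_le_right _ _) fun x => ?_
  have ha1 : 0 < a - 1 := sub_pos.2 ha
  have hx := (renyiD_le_iff_of_one_lt ha).1 (h x)
  rw [renyiD_le_iff_of_one_lt ha]
  calc renyiSum a (V x) (fun y => min (V x y) (2 ^ (c - 1) * Q y))
      ≤ ∑ y, V x y + renyiSum a (V x) (fun y => 2 ^ (c - 1) * Q y) :=
        renyiSum_min_le (hV.ne_top x) a _
    _ ≤ 1 + (2 ^ (c - 1)) ^ (1 - a) * 2 ^ ((a - 1) * (c + t)) := by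
        rw [renyiSum_const_mul_right a (two_rpow_ne_zero _) (two_rpow_ne_top _), hV x]
        gcongr
    _ = 2 ^ (0 : ℝ) + 2 ^ ((a - 1) * (t + 1)) := by
        rw [← ENNReal.rpow_mul, ← two_rpow_add, ENNReal.rpow_zero]
        ring_nf
    _ ≤ 2 ^ ((a - 1) * (t + 1)) + 2 ^ ((a - 1) * (t + 1)) := by
        gcongr
        exacts [one_le_two, by positivity]
    _ = 2 ^ ((a - 1) * (t + 1 + (a - 1)⁻¹)) := by
        rw [mul_add (a - 1) (t + 1), mul_inv_cancel₀ ha1.ne', two_rpow_add, ENNReal.rpow_one,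
          mul_two]

lemma simD_top_le_of_renyiD_le {V : A → B → ℝ≥0∞} (hV : IsChannel V) {Q : B → ℝ≥0∞}
    (hQ : IsDist Q) {c t : ℝ} (hc : 0 ≤ c) (ht : 0 ≤ t)
    (h : ∀ x, renyiD ⊤ (V x) Q ≤ ((c + t : ℝ) : EReal)) :
    simD ⊤ V c ≤ ((t + 1 + 2 : ℝ) : EReal) := by
  refine simD_le hV hc hQ (N' := fun x y => 2 ^ (-(t + 1)) * V x y) (fun x => ?_) (fun x y => ?_)
    fun x => renyiD_top_le_iff.2 fun y => ?_
  · rw [← Finset.mul_sum, hV x, mul_one, ← ENNReal.rpow_zero (x := 2), two_rpow_le_two_rpow_iff]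
    linarith
  · calc 2 ^ (-(t + 1)) * V x y ≤ 2 ^ (-(t + 1)) * (2 ^ (c + t) * Q y) :=
          mul_le_mul_right (renyiD_top_le_iff.1 (h x) y) _
      _ = 2 ^ (c - 1) * Q y := by
          rw [← mul_assoc, ← two_rpow_add]
          ring_nf
  · rw [← mul_assoc, ← two_rpow_add, add_neg_cancel, ENNReal.rpow_zero, one_mul]

lemma simD_le_of_renyiD_le {α : ℝ≥0∞} (hα : 1 < α) {V : A → B → ℝ≥0∞} (hV : IsChannel V)
    {Q : B → ℝ≥0∞} (hQ : IsDist Q) {c t : ℝ} (hc : 0 ≤ c) (ht : 0 ≤ t)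
    (h : ∀ x, renyiD α (V x) Q ≤ ((c + t : ℝ) : EReal)) :
    simD α V c ≤ ((t + (((α - 1)⁻¹).toReal + 3) : ℝ) : EReal) := by
  obtain rfl | ⟨a, ha, rfl⟩ := eq_top_or_eq_ofReal_of_one_lt hα
  · refine (simD_top_le_of_renyiD_le hV hQ hc ht h).trans_eq ?_
    norm_num [add_assoc]
  · refine (simD_ofReal_le_of_renyiD_le ha hV hQ hc ht h).trans_eq ?_
    rw [← ENNReal.ofReal_one, ← ENNReal.ofReal_sub _ zero_le_one, ENNReal.toReal_inv,
      ENNReal.toReal_ofReal (sub_nonneg.2 ha.le)]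
    ring_nf

lemma Esc_le_of_one_lt [Nonempty A] [Nonempty B] {α : ℝ≥0∞} (hα : 1 < α) {W : A → B → ℝ≥0∞}
    (hW : IsChannel W) {r T : ℝ} (hr : 0 ≤ r) (hT : 0 ≤ T)
    (h : renyiCap α W ≤ ((r + T : ℝ) : EReal)) : Esc α W r ≤ T := by
  refine Esc_le_of_forall_simD_le hr fun ε hε =>
    ⟨_, tendsto_const_div_atTop_nhds_zero_nat (((α - 1)⁻¹).toReal + 3), fun n => ?_⟩
  obtain ⟨Q, hQ, hle⟩ := exists_isDist_forall_renyiD_le (d := r + T + ε) hW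
    (h.trans_lt (EReal.coe_lt_coe_iff.2 (lt_add_of_pos_right _ hε)))
  refine simD_le_of_renyiD_le hα (hW.prodCh n) (hQ.prodDist n) (by positivity) (by positivity)
    fun xs => (renyiD_prodCh_le hα hW hQ hle xs).trans_eq ?_
  rw [← mul_add, add_assoc]

end OrderAboveOne

section Deviation

variable {B : Type*} [Fintype B] {n : ℕ}

lemma mul_logb_sq_le {t : ℝ} (h0 : 0 ≤ t) (h1 : t ≤ 1) :
    t * Real.logb 2 t ^ 2 ≤ 4 / Real.log 2 ^ 2 := by
  rcases h0.eq_or_lt with rfl | h0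
  · rw [zero_mul]
    positivity
  have hlog : (Real.log t * √t) ^ 2 ≤ 2 ^ 2 := by
    rw [sq_le_sq, abs_two, Real.sqrt_eq_rpow]
    simpa using (Real.abs_log_mul_self_rpow_lt t (1 / 2) h0 h1 one_half_pos).le
  calc t * Real.logb 2 t ^ 2 = (Real.log t * √t) ^ 2 / Real.log 2 ^ 2 := by
        rw [Real.logb, div_pow, mul_pow, Real.sq_sqrt h0.le]
        ring
    _ ≤ 4 / Real.log 2 ^ 2 := by
        gcongr
        linarith

lemma exists_sum_mul_logb_div_sq_le {δ : ℝ} (hδ : 0 < δ) :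
    ∃ C, ∀ v ∈ stdSimplex ℝ B, ∀ q ∈ innerSimplex B δ,
      ∑ y, v y * Real.logb 2 (v y / q y) ^ 2 ≤ C := by
  refine ⟨∑ _y : B, 2 * (4 / Real.log 2 ^ 2 + Real.logb 2 δ ^ 2), fun v hv q hq =>
    Finset.sum_le_sum fun y _ => ?_⟩
  have hq0 : 0 < q y := hδ.trans_le (hq.2 y)
  have hq1 : q y ≤ 1 := stdSimplex.le_one ⟨q, hq.1⟩ y
  have hv1 : v y ≤ 1 := stdSimplex.le_one ⟨v, hv⟩ y
  have hlogq : Real.logb 2 (q y) ^ 2 ≤ Real.logb 2 δ ^ 2 :=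
    sq_le_sq.2 (abs_le_abs_of_nonpos (Real.logb_nonpos one_lt_two hq0.le hq1)
      (Real.logb_le_logb_of_le one_lt_two hδ (hq.2 y)))
  rcases (hv.1 y).eq_or_lt with h | h
  · rw [← h, zero_mul]
    positivity
  calc v y * Real.logb 2 (v y / q y) ^ 2
      ≤ v y * (2 * (Real.logb 2 (v y) ^ 2 + Real.logb 2 (q y) ^ 2)) := by
        rw [Real.logb_div h.ne' hq0.ne', sub_eq_add_neg, ← neg_sq (Real.logb 2 (q y))]
        exact mul_le_mul_of_nonneg_left add_sq_le h.le
    _ = 2 * (v y * Real.logb 2 (v y) ^ 2 + v y * Real.logb 2 (q y) ^ 2) := by ring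
    _ ≤ 2 * (4 / Real.log 2 ^ 2 + Real.logb 2 δ ^ 2) := by
        gcongr
        · exact mul_logb_sq_le h.le hv1
        · exact (mul_le_of_le_one_left (sq_nonneg _) hv1).trans hlogq

lemma sum_prod_mul_sum_sq {v : Fin n → B → ℝ} (hv : ∀ i, ∑ y, v i y = 1) {u : Fin n → B → ℝ}
    (hu : ∀ i, ∑ y, v i y * u i y = 0) :
    ∑ ys : Fin n → B, (∏ i, v i (ys i)) * (∑ i, u i (ys i)) ^ 2 =
      ∑ i, ∑ y, v i y * u i y ^ 2 := by
  induction n with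
  | zero => simp
  | succ n ih =>
    have one : ∑ ys : Fin n → B, ∏ i, v i.succ (ys i) = 1 := by
      simp [← Fintype.prod_sum, hv]
    have mean : ∑ ys : Fin n → B, (∏ i, v i.succ (ys i)) * ∑ i, u i.succ (ys i) = 0 := by
      rw [sum_prod_mul_sum fun i => hv i.succ]
      simp [hu]
    have expand (y : B) : ∑ ys : Fin n → B, v 0 y * (∏ i, v i.succ (ys i)) *
        (u 0 y + ∑ i, u i.succ (ys i)) ^ 2 =
        v 0 y * u 0 y ^ 2 + v 0 y * ∑ i : Fin n, ∑ y, v i.succ y * u i.succ y ^ 2 := by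
      calc _ = v 0 y * u 0 y ^ 2 * ∑ ys : Fin n → B, ∏ i, v i.succ (ys i) +
            2 * v 0 y * u 0 y *
              ∑ ys : Fin n → B, (∏ i, v i.succ (ys i)) * ∑ i, u i.succ (ys i) +
            v 0 y *
              ∑ ys : Fin n → B, (∏ i, v i.succ (ys i)) * (∑ i, u i.succ (ys i)) ^ 2 := by
            rw [Finset.mul_sum, Finset.mul_sum, Finset.mul_sum, ← Finset.sum_add_distrib,
              ← Finset.sum_add_distrib]
            exact Finset.sum_congr rfl fun ys _ => by ring
        _ = _ := by rw [one, mean, ih (fun i => hv i.succ) fun i => hu i.succ, mul_one, mul_zero,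
            add_zero]
    simp only [sum_fin_succ_arrow, Fin.prod_univ_succ, Fin.sum_univ_succ, Fin.cons_zero,
      Fin.cons_succ, expand, Finset.sum_add_distrib, ← Finset.sum_mul, hv, one_mul]

lemma sum_mul_sub_sq_le {v : B → ℝ} (hv : ∑ y, v y = 1) (u : B → ℝ) :
    ∑ y, v y * (u y - ∑ z, v z * u z) ^ 2 ≤ ∑ y, v y * u y ^ 2 := by
  set μ := ∑ z, v z * u z with hμ
  calc ∑ y, v y * (u y - μ) ^ 2
      = ∑ y, v y * u y ^ 2 - 2 * μ * ∑ y, v y * u y + (∑ y, v y) * μ ^ 2 := by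
        rw [Finset.mul_sum, Finset.sum_mul, ← Finset.sum_sub_distrib, ← Finset.sum_add_distrib]
        exact Finset.sum_congr rfl fun y _ => by ring
    _ = ∑ y, v y * u y ^ 2 - μ ^ 2 := by
        rw [← hμ, hv]
        ring
    _ ≤ ∑ y, v y * u y ^ 2 := sub_le_self _ (sq_nonneg μ)

lemma sum_prod_mul_abs_sub_le {v : Fin n → B → ℝ} (hv : ∀ i, v i ∈ stdSimplex ℝ B)
    {u : Fin n → B → ℝ} {C : ℝ} (hC : ∀ i, ∑ y, v i y * u i y ^ 2 ≤ C) :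
    ∑ ys : Fin n → B, (∏ i, v i (ys i)) * |∑ i, u i (ys i) - ∑ i, ∑ y, v i y * u i y| ≤
      √(n * C) := by
  have hv1 (i) : ∑ y, v i y = 1 := (hv i).2
  have hV (ys : Fin n → B) : 0 ≤ ∏ i, v i (ys i) := Finset.prod_nonneg fun i _ => (hv i).1 _
  have hV1 : ∑ ys : Fin n → B, ∏ i, v i (ys i) = 1 := by simp [← Fintype.prod_sum, hv1]
  set μ : Fin n → ℝ := fun i => ∑ y, v i y * u i y with hμ
  have hcenter (i) : ∑ y, v i y * (u i y - μ i) = 0 := by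
    simp [mul_sub, ← Finset.sum_mul, hv1, hμ]
  refine Real.le_sqrt_of_sq_le ?_
  calc (∑ ys : Fin n → B, (∏ i, v i (ys i)) * |∑ i, u i (ys i) - ∑ i, μ i|) ^ 2
      ≤ (∑ ys : Fin n → B, ∏ i, v i (ys i)) *
          ∑ ys : Fin n → B, (∏ i, v i (ys i)) * (∑ i, u i (ys i) - ∑ i, μ i) ^ 2 :=
        Finset.sum_sq_le_sum_mul_sum_of_sq_le_mul _ (fun ys _ => hV ys)
          (fun ys _ => mul_nonneg (hV ys) (sq_nonneg _)) fun ys _ => by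
            rw [mul_pow, sq_abs, sq, mul_assoc]
    _ = ∑ i, ∑ y, v i y * (u i y - μ i) ^ 2 := by
        simp only [← Finset.sum_sub_distrib]
        rw [hV1, one_mul, sum_prod_mul_sum_sq (u := fun i y => u i y - μ i) hv1 hcenter]
    _ ≤ ∑ _i : Fin n, C :=
        Finset.sum_le_sum fun i _ => (sum_mul_sub_sq_le (hv1 i) (u i)).trans (hC i)
    _ = n * C := by simp

lemma logb_div_min_le {s t g k : ℝ} (hs : 0 < s) (ht : 0 < t) (h : t ≤ 2 ^ k * g) (R : ℝ) :
    Real.logb 2 (s / min s (2 ^ R * g)) ≤ max (Real.logb 2 (s / t) + k - R) 0 := by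
  have hg : 0 < g := pos_of_mul_pos_right (ht.trans_le h) (by positivity)
  rcases min_choice s (2 ^ R * g) with hmin | hmin
  · rw [hmin, div_self hs.ne', Real.logb_one]
    exact le_max_right _ _
  · have hlog := Real.logb_le_logb_of_le one_lt_two ht h
    rw [Real.logb_mul (by positivity) hg.ne', Real.logb_rpow two_pos (by norm_num)] at hlog
    rw [hmin, Real.logb_div hs.ne' (by positivity), Real.logb_mul (by positivity) hg.ne',
      Real.logb_rpow two_pos (by norm_num), Real.logb_div hs.ne' ht.ne']
    exact le_max_of_le_left (by linarith)

lemma logb_prod_div_prod {ι : Type*} [Fintype ι] {s t : ι → ℝ} (h : ∏ i, s i ≠ 0)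
    (ht : ∀ i, t i ≠ 0) :
    Real.logb 2 ((∏ i, s i) / ∏ i, t i) = ∑ i, Real.logb 2 (s i / t i) := by
  rw [← Finset.prod_div_distrib, Real.logb_prod _ _ fun i hi =>
    div_ne_zero (Finset.prod_ne_zero_iff.1 h i hi) (ht i)]

lemma kl_prod_min_le {v : Fin n → B → ℝ} (hv : ∀ i, v i ∈ stdSimplex ℝ B) {q : B → ℝ}
    (hq : ∀ y, 0 < q y) {C : ℝ} (hC : ∀ i, ∑ y, v i y * Real.logb 2 (v i y / q y) ^ 2 ≤ C)
    {Q : (Fin n → B) → ℝ} {k : ℝ} (hk : 0 ≤ k) (hQ : ∀ ys, ∏ i, q (ys i) ≤ 2 ^ k * Q ys) (R : ℝ) :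
    kl (fun ys => ∏ i, v i (ys i)) (fun ys => min (∏ i, v i (ys i)) (2 ^ R * Q ys)) ≤
      max (∑ i, kl (v i) q - R) 0 + k + √(n * C) := by
  have hV (ys : Fin n → B) : 0 ≤ ∏ i, v i (ys i) := Finset.prod_nonneg fun i _ => (hv i).1 _
  have hV1 : ∑ ys : Fin n → B, ∏ i, v i (ys i) = 1 := by
    simp [← Fintype.prod_sum, fun i => (hv i).2]
  set D := ∑ i, kl (v i) q
  set U : (Fin n → B) → ℝ := fun ys => ∑ i, Real.logb 2 (v i (ys i) / q (ys i))
  have hlog (ys : Fin n → B) (h : 0 < ∏ i, v i (ys i)) :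
      Real.logb 2 ((∏ i, v i (ys i)) / min (∏ i, v i (ys i)) (2 ^ R * Q ys)) ≤
        max (D - R) 0 + k + |U ys - D| := by
    refine (logb_div_min_le h (Finset.prod_pos fun i _ => hq _) (hQ ys) R).trans ?_
    rw [logb_prod_div_prod h.ne' fun i => (hq _).ne']
    exact max_le (by linarith [le_max_left (D - R) 0, le_abs_self (U ys - D)]) (by positivity)
  calc kl (fun ys => ∏ i, v i (ys i)) (fun ys => min (∏ i, v i (ys i)) (2 ^ R * Q ys))
      ≤ ∑ ys, (∏ i, v i (ys i)) * (max (D - R) 0 + k + |U ys - D|) := by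
        refine Finset.sum_le_sum fun ys _ => ?_
        rcases (hV ys).eq_or_lt with h | h
        · simp [← h]
        · exact mul_le_mul_of_nonneg_left (hlog ys h) h.le
    _ = max (D - R) 0 + k + ∑ ys, (∏ i, v i (ys i)) * |U ys - D| := by
        simp only [mul_add, Finset.sum_add_distrib, ← Finset.sum_mul, hV1, one_mul]
    _ ≤ max (D - R) 0 + k + √(n * C) := by
        have h := sum_prod_mul_abs_sub_le (u := fun i y => Real.logb 2 (v i y / q y)) hv hC
        exact add_le_add le_rfl h

end Deviation

section Types

variable {A B : Type*} [Fintype A] {n : ℕ}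

lemma sum_seqType_mul (xs : Fin n → A) (φ : A → ℝ) :
    ∑ x, seqType xs x * φ x = ∑ i, φ (xs i) := by
  simp only [seqType, ← nsmul_eq_mul, ← Finset.sum_const]
  exact Finset.sum_fiberwise' _ xs φ

lemma sum_seqType (xs : Fin n → A) : ∑ x, (seqType xs x : ℝ) = n := by
  simpa using sum_seqType_mul xs 1

lemma seqType_lt (xs : Fin n → A) (x : A) : seqType xs x < n + 1 :=
  Nat.lt_succ_of_le ((Finset.card_filter_le _ _).trans_eq (Finset.card_fin n))

/-- The uniform mixture of the product distributions `q τ × ⋯ × q τ` over all count vectors `τ`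
with entries at most `n`. Every type of `xs : Fin n → A` is such a `τ`, and the weight of each
component is only polynomially small in `n`. -/
def typeMixture (q : (A → ℕ) → B → ℝ) (n : ℕ) (ys : Fin n → B) : ℝ :=
  ((n + 1 : ℝ) ^ Fintype.card A)⁻¹ * ∑ τ : A → Fin (n + 1), ∏ i, q (fun x => τ x) (ys i)

lemma typeMixture_mem_stdSimplex [Fintype B] {q : (A → ℕ) → B → ℝ}
    (hq : ∀ τ, q τ ∈ stdSimplex ℝ B) (n : ℕ) : typeMixture q n ∈ stdSimplex ℝ (Fin n → B) := by
  refine ⟨fun ys => mul_nonneg (by positivity)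
    (Finset.sum_nonneg fun τ _ => Finset.prod_nonneg fun i _ => (hq _).1 _), ?_⟩
  have h1 (τ : A → ℕ) : ∑ ys : Fin n → B, ∏ i, q τ (ys i) = 1 := by
    simp [← Fintype.prod_sum, (hq τ).2]
  simp only [typeMixture]
  rw [← Finset.mul_sum, Finset.sum_comm]
  simp only [h1]
  rw [inv_mul_eq_one₀ (by positivity)]
  simp

lemma prod_le_typeMixture {q : (A → ℕ) → B → ℝ} (hq : ∀ τ y, 0 ≤ q τ y) (xs : Fin n → A)
    (ys : Fin n → B) : ∏ i, q (seqType xs) (ys i) ≤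
      2 ^ (Fintype.card A * Real.logb 2 (n + 1)) * typeMixture q n ys := by
  have hn : (2 : ℝ) ^ (Fintype.card A * Real.logb 2 (n + 1)) = (n + 1 : ℝ) ^ Fintype.card A := by
    rw [mul_comm, Real.rpow_mul two_pos.le, Real.rpow_logb two_pos (by norm_num) (by positivity),
      Real.rpow_natCast]
  rw [typeMixture, hn, mul_inv_cancel_left₀ (by positivity)]
  exact Finset.single_le_sum
    (f := fun τ : A → Fin (n + 1) => ∏ i, q (fun x => τ x) (ys i))
    (fun τ _ => Finset.prod_nonneg fun i _ => hq _ _)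
    (Finset.mem_univ fun x => ⟨seqType xs x, seqType_lt xs x⟩)

end Types

section Tilting

variable {B : Type*} [Fintype B] {a : ℝ} {P : B → ℝ≥0∞}

lemma kl_self {v : B → ℝ} : kl v v = 0 :=
  Finset.sum_eq_zero fun y _ => by
    by_cases h : v y = 0 <;> simp [h]

lemma toReal_suppRpow {p : ℝ≥0∞} (hp : p ≠ 0) (a : ℝ) : (suppRpow p a).toReal = p.toReal ^ a := by
  rw [suppRpow, if_neg hp, ENNReal.toReal_rpow]

lemma mul_rpow_kl_summand {p q v : ℝ} (hp : 0 < p) (hq : 0 < q) (hv : 0 < v) (a : ℝ) :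
    v * 2 ^ (-(a * Real.logb 2 (v / p) + (1 - a) * Real.logb 2 (v / q))) =
      p ^ a * q ^ (1 - a) := by
  rw [Real.logb_div hv.ne' hp.ne', Real.logb_div hv.ne' hq.ne',
    show -(a * (Real.logb 2 v - Real.logb 2 p) + (1 - a) * (Real.logb 2 v - Real.logb 2 q)) =
      Real.logb 2 p * a + Real.logb 2 q * (1 - a) - Real.logb 2 v by ring,
    Real.rpow_sub two_pos, Real.rpow_add two_pos, Real.rpow_mul two_pos.le,
    Real.rpow_mul two_pos.le, Real.rpow_logb two_pos (by norm_num) hp,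
    Real.rpow_logb two_pos (by norm_num) hq, Real.rpow_logb two_pos (by norm_num) hv,
    mul_div_cancel₀ _ hv.ne']

lemma renyiD_le_kl_add_kl (h0 : 0 ≤ a) (h1 : a < 1) (hP : ∀ y, P y ≠ ⊤) {N : B → ℝ}
    (hN : ∀ y, 0 ≤ N y) {v : B → ℝ} (hv : v ∈ stdSimplex ℝ B) (hvP : ∀ y, P y = 0 → v y = 0)
    (hvN : ∀ y, N y = 0 → v y = 0) :
    renyiD (ENNReal.ofReal a) P (fun y => ENNReal.ofReal (N y)) ≤
      ((a / (1 - a) * kl v (fun y => (P y).toReal) + kl v N : ℝ) : EReal) := by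
  set g : B → ℝ := fun y =>
    -(a * Real.logb 2 (v y / (P y).toReal) + (1 - a) * Real.logb 2 (v y / N y))
  have hexp : (a - 1) * (a / (1 - a) * kl v (fun y => (P y).toReal) + kl v N) =
      ∑ y, v y • g y := by
    have h : (a - 1) * (a / (1 - a)) = -a := by
      rw [← neg_sub, neg_mul, mul_div_cancel₀ _ (sub_pos.2 h1).ne']
    rw [mul_add, ← mul_assoc, h, kl, kl, Finset.mul_sum, Finset.mul_sum, ← Finset.sum_add_distrib]
    exact Finset.sum_congr rfl fun y _ => by
      simp only [g, smul_eq_mul]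
      ring
  have jensen := (convexOn_rpow_left (b := 2) two_pos).map_sum_le (p := g) (fun y _ => hv.1 y) hv.2
    fun y _ => Set.mem_univ _
  rw [renyiD_le_iff_of_lt_one h0 h1, two_rpow_eq_ofReal, hexp]
  refine (ENNReal.ofReal_le_ofReal jensen).trans ?_
  rw [ENNReal.ofReal_sum_of_nonneg fun y _ => smul_nonneg (hv.1 y) (by positivity)]
  refine Finset.sum_le_sum fun y _ => ?_
  rcases (hv.1 y).eq_or_lt with hy | hy
  · simp [← hy]
  have hPy : P y ≠ 0 := fun h => hy.ne' (hvP y h)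
  have hNy : 0 < N y := (hN y).lt_of_ne' fun h => hy.ne' (hvN y h)
  have hpy := ENNReal.toReal_pos hPy (hP y)
  rw [smul_eq_mul, mul_rpow_kl_summand hpy hNy hy, ENNReal.ofReal_mul (by positivity),
    ← ENNReal.ofReal_rpow_of_pos hpy, ← ENNReal.ofReal_rpow_of_pos hNy,
    ENNReal.ofReal_toReal (hP y), suppRpow, if_neg hPy]

lemma mul_logb_tilt_div {p q Z : ℝ} (hp : 0 < p) (hq : 0 < q) (hZ : 0 < Z) (a : ℝ) :
    a * Real.logb 2 (p ^ a * q ^ (1 - a) / Z / p) +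
      (1 - a) * Real.logb 2 (p ^ a * q ^ (1 - a) / Z / q) = -Real.logb 2 Z := by
  have hpq : 0 < p ^ a * q ^ (1 - a) := by positivity
  have hlog := congrArg (Real.logb 2) (mul_rpow_kl_summand hp hq (div_pos hpq hZ) a)
  rw [Real.logb_mul (div_pos hpq hZ).ne' (by positivity), Real.logb_rpow two_pos (by norm_num),
    Real.logb_div hpq.ne' hZ.ne'] at hlog
  linarith

lemma exists_kl_add_kl_le_of_renyiD_le (h0 : 0 ≤ a) (h1 : a < 1) (hP : ∀ y, P y ≠ ⊤) {q : B → ℝ}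
    (hq : ∀ y, 0 < q y) {d : ℝ}
    (h : renyiD (ENNReal.ofReal a) P (fun y => ENNReal.ofReal (q y)) ≤ d) :
    ∃ v ∈ stdSimplex ℝ B, (∀ y, P y = 0 → v y = 0) ∧
      a * kl v (fun y => (P y).toReal) + (1 - a) * kl v q ≤ (1 - a) * d := by
  set u : B → ℝ := fun y => (suppRpow (P y) a).toReal * q y ^ (1 - a)
  set Z := ∑ y, u y
  have hu (y) : 0 ≤ u y := mul_nonneg ENNReal.toReal_nonneg (Real.rpow_nonneg (hq y).le _)
  rw [renyiD_le_iff_of_lt_one h0 h1, renyiSum_ofReal hP hq, two_rpow_eq_ofReal,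
    ENNReal.ofReal_le_ofReal_iff (Finset.sum_nonneg fun y _ => hu y)] at h
  have hZ : 0 < Z := (by positivity : (0 : ℝ) < 2 ^ ((a - 1) * d)).trans_le h
  have hv1 : ∑ y, u y / Z = 1 := by rw [← Finset.sum_div, div_self hZ.ne']
  have hv0 (y) (hy : P y = 0) : u y / Z = 0 := by simp [u, hy]
  have hsummand (y) : a * (u y / Z * Real.logb 2 (u y / Z / (P y).toReal)) +
      (1 - a) * (u y / Z * Real.logb 2 (u y / Z / q y)) = u y / Z * -Real.logb 2 Z := by
    by_cases hy : P y = 0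
    · simp [hv0 y hy]
    have huy : u y = (P y).toReal ^ a * q y ^ (1 - a) := by simp only [u, toReal_suppRpow hy]
    rw [huy, ← mul_logb_tilt_div (ENNReal.toReal_pos hy (hP y)) (hq y) hZ a]
    ring
  refine ⟨fun y => u y / Z, ⟨fun y => div_nonneg (hu y) hZ.le, hv1⟩, hv0, ?_⟩
  rw [kl, kl, Finset.mul_sum, Finset.mul_sum, ← Finset.sum_add_distrib,
    Finset.sum_congr rfl fun y _ => hsummand y, ← Finset.sum_mul, hv1, one_mul]
  linarith [(Real.le_logb_iff_rpow_le one_lt_two hZ).2 h]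

end Tilting

section TestPairs

variable {A B : Type*} [Fintype B] {W : A → B → ℝ≥0∞} {δ : ℝ}

/-- The pairs of a channel `V` absolutely continuous with respect to `W` and an output distribution
with entries at least `δ`: the feasible set of the minimax problem behind the exponent for orders
below one. -/
def testPairs (W : A → B → ℝ≥0∞) (δ : ℝ) : Set ((A → B → ℝ) × (B → ℝ)) :=
  (Set.univ.pi fun x => stdSimplex ℝ B ∩ {v | ∀ y, W x y = 0 → v y = 0}) ×ˢ innerSimplex B δ

lemma IsChannel.toReal_mem_testPairs [Fintype A] (hW : IsChannel W) {q : B → ℝ}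
    (hq : q ∈ innerSimplex B δ) : (fun x y => (W x y).toReal, q) ∈ testPairs W δ :=
  ⟨fun x _ => ⟨⟨fun _ => ENNReal.toReal_nonneg, (hW.isDist x).sum_toReal⟩,
    fun y hy => by simp [hy]⟩, hq⟩

lemma convex_testPairs (W : A → B → ℝ≥0∞) (δ : ℝ) : Convex ℝ (testPairs W δ) := by
  refine (convex_pi fun x _ => (convex_stdSimplex ℝ B).inter ?_).prod (convex_innerSimplex δ)
  intro v hv v' hv' a b _ _ _ y hy
  simp [hv y hy, hv' y hy]

lemma isCompact_testPairs (W : A → B → ℝ≥0∞) (δ : ℝ) : IsCompact (testPairs W δ) := by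
  refine (isCompact_univ_pi fun x => (isCompact_stdSimplex ℝ B).inter_right ?_).prod
    (isCompact_innerSimplex δ)
  simp only [Set.ofPred_forall]
  exact isClosed_iInter fun y => isClosed_iInter fun _ =>
    isClosed_eq (continuous_apply y) continuous_const

lemma mul_logb_div (v : ℝ) {w : ℝ} (hw : w ≠ 0) :
    v * Real.logb 2 (v / w) = (Real.log 2)⁻¹ * (v * Real.log v + -Real.log w * v) := by
  rcases eq_or_ne v 0 with rfl | hv
  · simp
  · rw [Real.logb, Real.log_div hv hw]
    ring

lemma convexOn_mul_logb_div (w : ℝ) :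
    ConvexOn ℝ (Set.Ici 0) fun v => v * Real.logb 2 (v / w) := by
  rcases eq_or_ne w 0 with rfl | hw
  · simpa using convexOn_const 0 (convex_Ici (0 : ℝ))
  · simp only [mul_logb_div _ hw]
    exact (Real.convexOn_mul_log.add ((LinearMap.mulLeft ℝ (-Real.log w)).convexOn
      (convex_Ici 0))).smul (by positivity)

lemma continuous_mul_logb_div (w : ℝ) : Continuous fun v => v * Real.logb 2 (v / w) := by
  rcases eq_or_ne w 0 with rfl | hw
  · simpa using continuous_const
  · simp only [mul_logb_div _ hw]
    exact (Real.continuous_mul_log.add (continuous_const.mul continuous_id)).const_mul _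

lemma convexOn_kl_output (hδ : 0 < δ) (x : A) :
    ConvexOn ℝ (testPairs W δ) fun p => kl (p.1 x) p.2 := by
  have hmem {p} (hp : p ∈ testPairs W δ) (y : B) : 0 ≤ p.1 x y ∧ 0 < p.2 y :=
    ⟨(hp.1 x trivial).1.1 y, hδ.trans_le (hp.2.2 y)⟩
  exact ⟨convex_testPairs W δ, fun p hp p' hp' _ _ ha hb hab =>
    convexOn_kl.2 (x := (p.1 x, p.2)) (hmem hp) (y := (p'.1 x, p'.2)) (hmem hp') ha hb hab⟩

lemma continuousOn_kl_output (hδ : 0 < δ) (x : A) :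
    ContinuousOn (fun p : (A → B → ℝ) × (B → ℝ) => kl (p.1 x) p.2) (testPairs W δ) :=
  continuousOn_kl.comp (f := fun p : (A → B → ℝ) × (B → ℝ) => (p.1 x, p.2)) (by fun_prop)
    fun _ hp y => (hδ.trans_le (hp.2.2 y)).ne'

lemma convexOn_kl_row (w : B → ℝ) (x : A) :
    ConvexOn ℝ (testPairs W δ) fun p => kl (p.1 x) w := by
  refine ⟨convex_testPairs W δ, fun p hp p' hp' a b ha hb hab => ?_⟩
  simp only [kl, Finset.smul_sum, ← Finset.sum_add_distrib]
  exact Finset.sum_le_sum fun y _ => (convexOn_mul_logb_div (w y)).2 ((hp.1 x trivial).1.1 y)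
    ((hp'.1 x trivial).1.1 y) ha hb hab

lemma continuous_kl_row (w : B → ℝ) (x : A) :
    Continuous fun p : (A → B → ℝ) × (B → ℝ) => kl (p.1 x) w :=
  continuous_finsetSum _ fun y _ => (continuous_mul_logb_div (w y)).comp (by fun_prop)

lemma weighted_sum_le_of_forall_le [Fintype A] {τ u u' : A → ℝ} (hτ : ∀ x, 0 ≤ τ x) {s t r c : ℝ}
    (h : ∀ x, s * u x + t * u' x ≤ t * r + c) :
    s * ∑ x, τ x * u x + t * (∑ x, τ x * u' x - (∑ x, τ x) * r) ≤ (∑ x, τ x) * c := by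
  have hsum := Finset.sum_le_sum fun x (_ : x ∈ Finset.univ) =>
    mul_le_mul_of_nonneg_left (h x) (hτ x)
  rw [← Finset.sum_mul] at hsum
  simp only [mul_add, mul_left_comm (τ _), Finset.sum_add_distrib, ← Finset.mul_sum] at hsum
  linarith

variable [Fintype A] [Nonempty A] [Nonempty B] {s r T ε : ℝ}

lemma exists_mem_testPairs_forall_le (hW : IsChannel W) (hs : 0 ≤ s) (hT : 0 ≤ T)
    (hcap : ∀ t, 0 < t → t ≤ 1 →
      renyiCap (ENNReal.ofReal (s / (s + t))) W ≤ ((r + T / t : ℝ) : EReal))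
    (hε : 0 < ε) : ∃ δ > 0, ∀ t, 0 ≤ t → t ≤ 1 → ∃ p ∈ testPairs W δ, ∀ x,
      s * kl (p.1 x) (fun y => (W x y).toReal) + t * kl (p.1 x) p.2 ≤ t * r + T + ε := by
  obtain ⟨δ, hδ, hach⟩ := exists_forall_renyiD_le_of_renyiCap_lt (A := A) (B := B) (half_pos hε)
  have hq (t : ℝ) (h0 : 0 < t) (h1 : t ≤ 1) := hach (d := r + T / t + ε / 2)
    ENNReal.ofReal_ne_top hW ((hcap t h0 h1).trans_lt (EReal.coe_lt_coe_iff.2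
      (lt_add_of_pos_right _ (half_pos hε))))
  refine ⟨δ, hδ, fun t h0 h1 => ?_⟩
  rcases h0.eq_or_lt with rfl | h0
  · obtain ⟨q, hq, -⟩ := hq 1 one_pos le_rfl
    refine ⟨_, hW.toReal_mem_testPairs hq, fun x => ?_⟩
    rw [kl_self]
    linarith
  · obtain ⟨q, hq, hD⟩ := hq t h0 h1
    have hst : 0 < s + t := add_pos_of_nonneg_of_pos hs h0
    choose v hv hvW hkl using fun x => exists_kl_add_kl_le_of_renyiD_le (by positivity)
      ((div_lt_one hst).2 (lt_add_of_pos_right s h0)) (hW.ne_top x)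
      (fun y => hδ.trans_le (hq.2 y)) (hD x)
    refine ⟨(v, q), ⟨fun x _ => ⟨hv x, hvW x⟩, hq⟩, fun x => ?_⟩
    have h := mul_le_mul_of_nonneg_left (hkl x) hst.le
    calc s * kl (v x) (fun y => (W x y).toReal) + t * kl (v x) q
        = (s + t) * (s / (s + t) * kl (v x) (fun y => (W x y).toReal) +
            (1 - s / (s + t)) * kl (v x) q) := by
          field_simp
          ring
      _ ≤ (s + t) * ((1 - s / (s + t)) * (r + T / t + ε / 2 + ε / 2)) := h
      _ = t * r + T + t * ε := by
          field_simp
          ring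
      _ ≤ t * r + T + ε := by
          gcongr
          exact mul_le_of_le_one_left hε.le h1

lemma exists_mem_testPairs_sum_le (hW : IsChannel W) (hs : 0 ≤ s) (hT : 0 ≤ T)
    (hcap : ∀ t, 0 < t → t ≤ 1 →
      renyiCap (ENNReal.ofReal (s / (s + t))) W ≤ ((r + T / t : ℝ) : EReal))
    (hε : 0 < ε) : ∃ δ > 0, ∀ τ : A → ℝ, (∀ x, 0 ≤ τ x) → ∃ p ∈ testPairs W δ,
      s * ∑ x, τ x * kl (p.1 x) (fun y => (W x y).toReal) +
        max (∑ x, τ x * kl (p.1 x) p.2 - (∑ x, τ x) * r) 0 ≤ (∑ x, τ x) * (T + ε) := by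
  obtain ⟨δ, hδ, hach⟩ := exists_mem_testPairs_forall_le hW hs hT hcap hε
  refine ⟨δ, hδ, fun τ hτ => ?_⟩
  set w : A → B → ℝ := fun x y => (W x y).toReal
  have hrow := convexOn_sum_mul (convex_testPairs W δ) (fun x => convexOn_kl_row (w x) x) hτ
  have hrowc : Continuous fun p : (A → B → ℝ) × (B → ℝ) => s * ∑ x, τ x * kl (p.1 x) (w x) :=
    (continuous_finsetSum _ fun x _ => (continuous_kl_row (w x) x).const_mul _).const_mul s
  have hout := convexOn_sum_mul (convex_testPairs W δ) (convexOn_kl_output hδ) hτ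
  have houtc : ContinuousOn (fun p : (A → B → ℝ) × (B → ℝ) => ∑ x, τ x * kl (p.1 x) p.2)
      (testPairs W δ) :=
    continuousOn_finsetSum _ fun x _ => (continuousOn_kl_output hδ x).const_mul _
  refine exists_add_max_le_of_forall_add_mul_le (isCompact_testPairs W δ) (hrow.smul hs)
    (hout.sub (concaveOn_const _ (convex_testPairs W δ))) hrowc.continuousOn
    (houtc.sub continuousOn_const) fun t h0 h1 => ?_
  obtain ⟨p, hp, hle⟩ := hach t h0 h1
  have h := weighted_sum_le_of_forall_le hτ fun x => (hle x).trans_eq (add_assoc _ _ _)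
  exact ⟨p, hp, h⟩

end TestPairs

section OrderAtMostOne

variable {A B : Type*} [Fintype A] [Fintype B] {W : A → B → ℝ≥0∞} {r s T δ C : ℝ}
  {p : (A → ℕ) → (A → B → ℝ) × (B → ℝ)} {n : ℕ}

/-- A choice of a test pair for every count vector `τ` such that inputs of type `τ` cost at most `T`
per letter: `s` times the divergence from `W`, plus the excess over `r` of the divergence from the
output distribution. -/
def IsTestScheme (W : A → B → ℝ≥0∞) (δ s r T : ℝ) (p : (A → ℕ) → (A → B → ℝ) × (B → ℝ)) : Prop :=
  ∀ τ, p τ ∈ testPairs W δ ∧ s * ∑ x, τ x * kl ((p τ).1 x) (fun y => (W x y).toReal) +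
    max (∑ x, τ x * kl ((p τ).1 x) (p τ).2 - (∑ x, (τ x : ℝ)) * r) 0 ≤ (∑ x, (τ x : ℝ)) * T

/-- The law of the output sequence when the input `xs` is sent through the memoryless channel that
the scheme `p` selects for the type of `xs`. -/
def schemeCh (p : (A → ℕ) → (A → B → ℝ) × (B → ℝ)) (xs : Fin n → A) (ys : Fin n → B) : ℝ :=
  ∏ i, (p (seqType xs)).1 (xs i) (ys i)

/-- `schemeCh p` capped at `2 ^ R` times the universal output distribution, so that about `R` bits
suffice to simulate it. -/
def cappedCh (p : (A → ℕ) → (A → B → ℝ) × (B → ℝ)) (R : ℝ) (xs : Fin n → A) (ys : Fin n → B) : ℝ :=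
  min (schemeCh p xs ys) (2 ^ R * typeMixture (fun τ => (p τ).2) n ys)

lemma schemeCh_mem_stdSimplex (hp : ∀ τ, p τ ∈ testPairs W δ) (xs : Fin n → A) :
    schemeCh p xs ∈ stdSimplex ℝ (Fin n → B) := by
  have hv (i) := ((hp (seqType xs)).1 (xs i) trivial).1
  refine ⟨fun ys => Finset.prod_nonneg fun i _ => (hv i).1 _, ?_⟩
  simp [schemeCh, ← Fintype.prod_sum, fun i => (hv i).2]

lemma kl_schemeCh_prodCh (hW : IsChannel W) (hp : ∀ τ, p τ ∈ testPairs W δ) (xs : Fin n → A) :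
    kl (schemeCh p xs) (fun ys => (prodCh n W xs ys).toReal) =
      ∑ x, seqType xs x * kl ((p (seqType xs)).1 x) fun y => (W x y).toReal := by
  have hv (x) := (hp (seqType xs)).1 x trivial
  rw [sum_seqType_mul xs fun x => kl ((p (seqType xs)).1 x) fun y => (W x y).toReal]
  simp only [prodCh, ENNReal.toReal_prod]
  exact kl_prod (v := fun i => (p (seqType xs)).1 (xs i)) (w := fun i y => (W (xs i) y).toReal)
    (fun i => (hv _).1.2) fun i y h =>
      (hv _).2 y ((ENNReal.toReal_eq_zero_iff _).1 h |>.resolve_right (hW.ne_top _ y))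

lemma kl_schemeCh_cappedCh_le (hp : ∀ τ, p τ ∈ testPairs W δ) (hδ : 0 < δ)
    (hC : ∀ v ∈ stdSimplex ℝ B, ∀ q ∈ innerSimplex B δ,
      ∑ y, v y * Real.logb 2 (v y / q y) ^ 2 ≤ C) (xs : Fin n → A) (R : ℝ) :
    kl (schemeCh p xs) (cappedCh p R xs) ≤
      max (∑ x, seqType xs x * kl ((p (seqType xs)).1 x) (p (seqType xs)).2 - R) 0 +
        Fintype.card A * Real.logb 2 (n + 1) + √(n * C) := by
  obtain ⟨hv, hq⟩ := hp (seqType xs)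
  rw [sum_seqType_mul xs fun x => kl ((p (seqType xs)).1 x) (p (seqType xs)).2]
  exact kl_prod_min_le (v := fun i => (p (seqType xs)).1 (xs i)) (q := (p (seqType xs)).2)
    (Q := typeMixture (fun τ => (p τ).2) n) (fun i => (hv _ trivial).1)
    (fun y => hδ.trans_le (hq.2 y)) (fun i => hC _ (hv _ trivial).1 _ hq)
    (mul_nonneg (Nat.cast_nonneg _) (Real.logb_nonneg one_lt_two (by simp)))
    (prod_le_typeMixture (fun τ y => (hp τ).2.1.1 y) xs) R

lemma IsTestScheme.mul_kl_add_kl_le (hp : IsTestScheme W δ s r T p) (hW : IsChannel W) (hδ : 0 < δ)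
    (hC : ∀ v ∈ stdSimplex ℝ B, ∀ q ∈ innerSimplex B δ,
      ∑ y, v y * Real.logb 2 (v y / q y) ^ 2 ≤ C) (xs : Fin n → A) :
    s * kl (schemeCh p xs) (fun ys => (prodCh n W xs ys).toReal) +
        kl (schemeCh p xs) (cappedCh p (n * r - 1) xs) ≤
      n * T + (Fintype.card A * Real.logb 2 (n + 1) + √(n * C) + 1) := by
  have hmem (τ) := (hp τ).1
  have hcost := (hp (seqType xs)).2
  rw [← kl_schemeCh_prodCh hW hmem, sum_seqType] at hcost
  have hout := kl_schemeCh_cappedCh_le hmem hδ hC xs (n * r - 1)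
  have hmax (D : ℝ) : max (D - (n * r - 1)) 0 ≤ max (D - n * r) 0 + 1 :=
    max_le (by linarith [le_max_left (D - n * r) 0]) (by positivity)
  linarith [hmax (∑ x, seqType xs x * kl ((p (seqType xs)).1 x) (p (seqType xs)).2)]

lemma schemeCh_eq_zero_of_cappedCh_eq_zero (hp : ∀ τ, p τ ∈ testPairs W δ) (hδ : 0 < δ) {R : ℝ}
    {xs : Fin n → A} {ys : Fin n → B} (h : cappedCh p R xs ys = 0) : schemeCh p xs ys = 0 := by
  have hpos : 0 < ∏ i, (p (seqType xs)).2 (ys i) :=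
    Finset.prod_pos fun i _ => hδ.trans_le ((hp _).2.2 _)
  have hQ := pos_of_mul_pos_right
    (hpos.trans_le (prod_le_typeMixture (fun τ y => (hp τ).2.1.1 y) xs ys)) (by positivity)
  exact ((min_eq_iff.1 h).resolve_right fun h => (by positivity : 2 ^ R * _ ≠ (0 : ℝ)) h.1).1

lemma simD_prodCh_le_of_isTestScheme {α : ℝ≥0∞} (hW : IsChannel W) (hr : 0 ≤ r)
    (hp : IsTestScheme W δ s r T p) {t : ℝ}
    (h : ∀ xs : Fin n → A, renyiD α (prodCh n W xs)
      (fun ys => ENNReal.ofReal (cappedCh p (n * r - 1) xs ys)) ≤ t) :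
    simD α (prodCh n W) (n * r) ≤ ((t + 2 : ℝ) : EReal) := by
  refine simD_le (hW.prodCh n) (by positivity)
    (isDist_ofReal (typeMixture_mem_stdSimplex (fun τ => (hp τ).1.2.1) n)) (fun xs => ?_)
    (fun xs ys => ?_) h
  · have hmem := schemeCh_mem_stdSimplex (fun τ => (hp τ).1) xs
    refine (Finset.sum_le_sum fun ys _ => ENNReal.ofReal_le_ofReal (min_le_left _ _)).trans ?_
    rw [← ENNReal.ofReal_sum_of_nonneg fun ys _ => hmem.1 ys, hmem.2, ENNReal.ofReal_one]
  · refine (ENNReal.ofReal_le_ofReal (min_le_right _ _)).trans_eq ?_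
    rw [ENNReal.ofReal_mul (by positivity), two_rpow_eq_ofReal]

lemma tendsto_div_of_log_add_sqrt (k C c : ℝ) :
    Tendsto (fun n : ℕ => (k * Real.logb 2 (n + 1) + √(n * C) + c) / n) atTop (nhds 0) := by
  have hlog : Tendsto (fun n : ℕ => Real.log (n + 1) / n) atTop (nhds 0) := by
    have h := (Real.tendsto_pow_log_div_mul_add_atTop 1 (-1) 1 one_ne_zero).comp
      (tendsto_atTop_add_const_right _ 1 tendsto_natCast_atTop_atTop)
    simpa [Function.comp_def] using h
  have hsqrt : Tendsto (fun n : ℕ => √C / √n) atTop (nhds 0) :=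
    tendsto_const_nhds.div_atTop (Real.tendsto_sqrt_atTop.comp tendsto_natCast_atTop_atTop)
  have h := ((hlog.const_mul (k / Real.log 2)).add hsqrt).add
    (tendsto_const_div_atTop_nhds_zero_nat c)
  simp only [mul_zero, add_zero] at h
  refine h.congr fun n => ?_
  rw [Real.logb, Real.sqrt_mul (Nat.cast_nonneg n), add_div, add_div, mul_comm √(n : ℝ),
    mul_div_assoc √C, Real.sqrt_div_self']
  ring

lemma Esc_le_of_forall_isTestScheme {α : ℝ≥0∞} (hW : IsChannel W) (hr : 0 ≤ r)
    (h : ∀ ε > 0, ∃ δ > 0, ∃ p, IsTestScheme W δ s r (T + ε) p ∧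
      ∀ (n : ℕ) (xs : Fin n → A) {N : (Fin n → B) → ℝ}, (∀ ys, 0 ≤ N ys) →
        (∀ ys, N ys = 0 → schemeCh p xs ys = 0) →
        renyiD α (prodCh n W xs) (fun ys => ENNReal.ofReal (N ys)) ≤
          ((s * kl (schemeCh p xs) (fun ys => (prodCh n W xs ys).toReal) +
            kl (schemeCh p xs) N : ℝ) : EReal)) : Esc α W r ≤ T := by
  refine Esc_le_of_forall_simD_le hr fun ε hε => ?_
  obtain ⟨δ, hδ, p, hp, hD⟩ := h ε hε
  obtain ⟨C, hC⟩ := exists_sum_mul_logb_div_sq_le (B := B) hδ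
  refine ⟨_, tendsto_div_of_log_add_sqrt (Fintype.card A) C (1 + 2), fun n => ?_⟩
  refine (simD_prodCh_le_of_isTestScheme hW hr hp fun xs => (hD n xs (fun ys => ?_) fun ys =>
    schemeCh_eq_zero_of_cappedCh_eq_zero (fun τ => (hp τ).1) hδ).trans
    (EReal.coe_le_coe_iff.2 (hp.mul_kl_add_kl_le hW hδ hC xs))).trans_eq ?_
  · exact le_min ((schemeCh_mem_stdSimplex (fun τ => (hp τ).1) xs).1 ys) (mul_nonneg (by positivity)
      ((typeMixture_mem_stdSimplex (fun τ => (hp τ).1.2.1) n).1 ys))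
  · ring_nf

lemma Esc_ofReal_le_of_lt_one [Nonempty A] [Nonempty B] {a : ℝ} (h0 : 0 ≤ a) (h1 : a < 1)
    (hW : IsChannel W) (hr : 0 ≤ r) (hT : 0 ≤ T)
    (hcap : ∀ t, 0 < t → t ≤ 1 →
      renyiCap (ENNReal.ofReal (a / (1 - a) / (a / (1 - a) + t))) W ≤ ((r + T / t : ℝ) : EReal)) :
    Esc (ENNReal.ofReal a) W r ≤ T := by
  have hs : 0 ≤ a / (1 - a) := div_nonneg h0 (sub_pos.2 h1).le
  refine Esc_le_of_forall_isTestScheme (s := a / (1 - a)) hW hr fun ε hε => ?_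
  obtain ⟨δ, hδ, hsel⟩ := exists_mem_testPairs_sum_le hW hs hT hcap hε
  choose p hp hcost using fun τ : A → ℕ => hsel (fun x => τ x) fun x => Nat.cast_nonneg _
  refine ⟨δ, hδ, p, fun τ => ⟨hp τ, hcost τ⟩, fun n xs N hN hsupp => ?_⟩
  refine renyiD_le_kl_add_kl h0 h1 ((hW.prodCh n).ne_top xs) hN (schemeCh_mem_stdSimplex hp xs)
    (fun ys hys => ?_) hsupp
  obtain ⟨i, hi, hys⟩ := Finset.prod_eq_zero_iff.1 hys
  exact Finset.prod_eq_zero hi (((hp (seqType xs)).1 (xs i) trivial).2 (ys i) hys)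

lemma Esc_one_le [Nonempty A] [Nonempty B] (hW : IsChannel W) (hr : 0 ≤ r) (hT : 0 ≤ T)
    (hcap : renyiCap 1 W ≤ ((r + T : ℝ) : EReal)) : Esc 1 W r ≤ T := by
  refine Esc_le_of_forall_isTestScheme (s := 0) hW hr fun ε hε => ?_
  obtain ⟨δ, hδ, hach⟩ := exists_forall_renyiD_le_of_renyiCap_lt (A := A) (B := B) (half_pos hε)
  obtain ⟨q, hq, hD⟩ := hach (d := r + T + ε / 2) ENNReal.one_ne_top hW
    (hcap.trans_lt (EReal.coe_lt_coe_iff.2 (lt_add_of_pos_right _ (half_pos hε))))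
  refine ⟨δ, hδ, fun _ => (fun x y => (W x y).toReal, q),
    fun τ => ⟨hW.toReal_mem_testPairs hq, ?_⟩, fun n xs N hN hsupp => ?_⟩
  · have hrow (x) : kl (fun y => (W x y).toReal) q ≤ r + T + ε := by
      have h := ((renyiD_one_le_iff (hW.ne_top x) fun _ => ENNReal.ofReal_ne_top).1 (hD x)).2
      simp only [ENNReal.toReal_ofReal (hq.1.1 _)] at h
      exact h.trans_eq (by ring)
    have hsum := Finset.sum_le_sum fun x (_ : x ∈ Finset.univ) =>
      mul_le_mul_of_nonneg_left (hrow x) (Nat.cast_nonneg (α := ℝ) (τ x))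
    rw [← Finset.sum_mul] at hsum
    rw [zero_mul, zero_add]
    exact max_le (by linarith) (by positivity)
  · have hscheme : schemeCh (fun _ => (fun x y => (W x y).toReal, q)) xs =
        fun ys => (prodCh n W xs ys).toReal := by
      ext ys; rw [schemeCh, prodCh, ENNReal.toReal_prod]
    rw [hscheme] at hsupp ⊢
    refine (renyiD_one_le_iff ((hW.prodCh n).ne_top xs) fun _ => ENNReal.ofReal_ne_top).2
      ⟨fun ys h hys => ?_, ?_⟩
    · have := hsupp ys (le_antisymm (ENNReal.ofReal_eq_zero.1 hys) (hN ys))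
      exact h (((ENNReal.toReal_eq_zero_iff _).1 this).resolve_right ((hW.prodCh n).ne_top xs ys))
    · simp only [ENNReal.toReal_ofReal (hN _), zero_mul, zero_add, le_refl]

end OrderAtMostOne

section StrongConverseExponent

variable {A B : Type*} [Fintype A] [Fintype B] [Nonempty A] [Nonempty B] {W : A → B → ℝ≥0∞}
  {r T : ℝ}

lemma Esc_zero_le (hW : IsChannel W) (hr : 0 ≤ r) (hT : 0 ≤ T)
    (hcap : renyiCap 0 W ≤ ((r + T : ℝ) : EReal)) : Esc 0 W r ≤ T := by
  rw [← ENNReal.ofReal_zero]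
  refine Esc_ofReal_le_of_lt_one le_rfl one_pos hW hr hT fun t ht ht1 => ?_
  rw [zero_div, zero_div, ENNReal.ofReal_zero]
  exact hcap.trans (EReal.coe_le_coe_iff.2 (by gcongr; exact le_div_self hT ht ht1))

lemma Esc_le_of_renyiCap_le {α : ℝ≥0∞} (hα : α = 0 ∨ 1 ≤ α) (hW : IsChannel W) (hr : 0 ≤ r)
    (hT : 0 ≤ T) (hcap : renyiCap α W ≤ ((r + T : ℝ) : EReal)) : Esc α W r ≤ T := by
  obtain rfl | hα := hα
  · exact Esc_zero_le hW hr hT hcap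
  obtain rfl | hα := hα.eq_or_lt
  · exact Esc_one_le hW hr hT hcap
  · exact Esc_le_of_one_lt hα hW hr hT hcap

lemma Esc_ofReal_le_of_forall_mul_renyiCap_sub_le {a : ℝ} (h0 : 0 < a) (h1 : a < 1)
    (hW : IsChannel W) (hr : 0 ≤ r)
    (h : ∀ b, a ≤ b → b ≤ 1 →
      (((a * (1 - b)) / (b * (1 - a)) : ℝ) : EReal) * (renyiCap (ENNReal.ofReal b) W - r) ≤ T) :
    Esc (ENNReal.ofReal a) W r ≤ T := by
  have hT : 0 ≤ T := by simpa using h 1 h1.le le_rfl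
  refine Esc_ofReal_le_of_lt_one h0.le h1 hW hr hT fun t ht ht1 => ?_
  have ha : 0 < 1 - a := sub_pos.2 h1
  have : 0 < a / (1 - a) := div_pos h0 ha
  set b := a / (1 - a) / (a / (1 - a) + t) with hb
  have hb' : b = a / (a + t * (1 - a)) := by rw [hb]; field_simp
  have hab : a ≤ b := by
    rw [hb', le_div_iff₀ (by positivity)]
    exact mul_le_of_le_one_right h0.le (by linarith [mul_le_of_le_one_left ha.le ht1])
  have hcoef : a * (1 - b) / (b * (1 - a)) = t := by
    rw [hb']; field_simp; ring
  have hcap := h b hab ((div_le_one (by positivity)).2 (by linarith))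
  rw [hcoef, ← inv_inv t, inv_mul_le_coe_iff_of_pos (inv_pos.2 ht), inv_mul_eq_div,
    EReal.sub_le_iff_le_add (by simp) (by simp), ← EReal.coe_add] at hcap
  rwa [add_comm r]

end StrongConverseExponent

/-- **Strong converse exponent of channel simulation** (Theorem 3).
For any discrete memoryless channel `W` and `r ≥ 0`:
`E_sc^{(α)}(W,r) = max_{α ≤ β ≤ 1} (α(1-β))/(β(1-α)) (I_β(W) - r)` for `α ∈ (0,1)`,
and `E_sc^{(α)}(W,r) = |I_α(W) - r|⁺` for `α ∈ {0} ∪ [1,∞]`. -/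
theorem strong_converse_exponent
    {X Y : Type*} [Fintype X] [Fintype Y] [Nonempty X] [Nonempty Y]
    (W : X → Y → ℝ≥0∞) (hW : IsChannel W) (r : ℝ) (hr : 0 ≤ r) :
    (∀ α : ℝ, 0 < α → α < 1 →
      Esc (ENNReal.ofReal α) W r =
        ⨆ β : {β : ℝ // α ≤ β ∧ β ≤ 1},
          (((α * (1 - β.1)) / (β.1 * (1 - α)) : ℝ) : EReal) *
            (renyiCap (ENNReal.ofReal β.1) W - (r : EReal))) ∧
    (∀ α : ℝ≥0∞, α = 0 ∨ 1 ≤ α →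
      Esc α W r = max (renyiCap α W - (r : EReal)) 0) := by
  refine ⟨fun α h0 h1 => le_antisymm ?_ ?_, fun α hα => le_antisymm ?_ ?_⟩
  · refine EReal.le_of_forall_lt_iff_le.1 fun T hT => ?_
    exact Esc_ofReal_le_of_forall_mul_renyiCap_sub_le h0 h1 hW hr fun β hαβ hβ =>
      (le_iSup_of_le ⟨β, hαβ, hβ⟩ le_rfl).trans hT.le
  · exact iSup_le fun β => mul_renyiCap_sub_le_Esc_of_lt_one h0 h1 β.2.1 β.2.2 hW r
  · refine EReal.le_of_forall_lt_iff_le.1 fun T hT => ?_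
    obtain ⟨hcap, hT⟩ := max_lt_iff.1 hT
    refine Esc_le_of_renyiCap_le hα hW hr (EReal.coe_nonneg.1 hT.le) ?_
    rw [add_comm, EReal.coe_add]
    exact (EReal.sub_le_iff_le_add (by simp) (by simp)).1 hcap.le
  · exact max_le (renyiCap_sub_le_Esc α hW r) (Esc_nonneg α hW r)

end RST
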